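/- arXiv:2502.04872 — 5 statements merged into one kernel-verified Lean document; each statement's English description precedes it below -/
import Mathlib

section
/- Let I be a monomial ideal in R, W a subset of the variables, and n ≥ 1. Then (I^n)_W = (I_W)^n, where K_W = K : f^∞ with f the product of the variables in W. -/
open MvPolynomial

/-- `I` is a monomial ideal: it is generated by a set of monomials. -/
def IsMonomialIdeal {K : Type*} [Field K] {σ : Type*} (I : Ideal (MvPolynomial σ K)) : Prop :=
  ∃ S : Set (σ →₀ ℕ), I = Ideal.span ((fun s => (monomial s (1 : K))) '' S)

/-- The saturation `I : f^∞ = { r : f^m * r ∈ I for some m }` of an ideal `I`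
with respect to an element `f`. -/
def Ideal.satur {R : Type*} [CommRing R] (I : Ideal R) (f : R) : Ideal R :=
  ⨆ m : ℕ, I.colon (Ideal.span {f ^ m})

theorem mem_satur_aux {R : Type*} [CommRing R] (I : Ideal R) (f r : R) :
    r ∈ I.satur f ↔ ∃ m : ℕ, f ^ m * r ∈ I := by
  have key : ∀ (m : ℕ) (r : R), r ∈ I.colon (Ideal.span {f ^ m}) ↔ f ^ m * r ∈ I := by
    intro m r
    rw [Submodule.mem_colon]
    constructor
    · intro h
      have := h (f ^ m) (Ideal.mem_span_singleton_self _)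
      rwa [smul_eq_mul, mul_comm] at this
    · intro h p hp
      obtain ⟨c, rfl⟩ := Ideal.mem_span_singleton'.1 hp
      have := I.mul_mem_left c h
      rw [smul_eq_mul]
      convert this using 1
      ring
  unfold Ideal.satur
  rw [Submodule.mem_iSup_of_directed]
  · simp only [key]
  · apply Monotone.directed_le
    intro a b hab r hr
    rw [key] at hr ⊢
    obtain ⟨c, rfl⟩ := Nat.exists_eq_add_of_le hab
    have := I.mul_mem_left (f ^ c) hr
    convert this using 1
    ring

open Classical in
noncomputable def killW {K : Type*} [Field K] {σ : Type*} (W : Finset σ) :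
    MvPolynomial σ K →ₐ[K] MvPolynomial σ K :=
  aeval (fun x => if x ∈ W then 1 else X x)

open Classical in
theorem killW_monomial {K : Type*} [Field K] {σ : Type*} (W : Finset σ) (s : σ →₀ ℕ) :
    killW W (monomial s (1 : K)) = monomial (s.filter (· ∉ W)) 1 := by
  induction s using Finsupp.induction_linear with
  | zero => rw [Finsupp.filter_zero]; exact map_one _
  | add a b ha hb =>
    have h : ∀ a b : σ →₀ ℕ, monomial (a + b) (1 : K) = monomial a 1 * monomial b 1 := by
      intro a b; simp [monomial_mul]
    rw [h, map_mul, ha, hb, ← h, Finsupp.filter_add]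
  | single x k =>
    by_cases hx : x ∈ W
    · rw [Finsupp.filter_single_of_neg _ (by simpa using hx)]
      rw [killW, aeval_monomial]; simp [hx]
    · rw [Finsupp.filter_single_of_pos (p := fun x => x ∉ W) hx]
      rw [killW, aeval_monomial]; simp [hx, X_pow_eq_monomial]

open Classical in
theorem satur_eq_map {K : Type*} [Field K] {σ : Type*}
    (I : Ideal (MvPolynomial σ K)) (hI : IsMonomialIdeal I) (W : Finset σ) :
    I.satur (∏ x ∈ W, (X x : MvPolynomial σ K)) = I.map (killW W) := by
  obtain ⟨S, rfl⟩ := hI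
  have hmap : (Ideal.span ((fun s => (monomial s (1 : K))) '' S)).map (killW W)
      = Ideal.span ((fun s => (monomial s (1 : K))) ''
        ((fun s : σ →₀ ℕ => s.filter (· ∉ W)) '' S)) := by
    rw [Ideal.map_span, Set.image_image, Set.image_image]
    simp only [killW_monomial]
  set w : σ →₀ ℕ := ∑ x ∈ W, Finsupp.single x 1 with hw
  have hf : ∀ m : ℕ, (∏ x ∈ W, (X x : MvPolynomial σ K)) ^ m = monomial (m • w) 1 := by
    intro m
    have : (∏ x ∈ W, (X x : MvPolynomial σ K)) = monomial w 1 := by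
      rw [hw, monomial_sum_one]; rfl
    rw [this, monomial_pow, one_pow]
  have hwx : ∀ x, w x = if x ∈ W then 1 else 0 := by
    intro x
    simp [hw, Finsupp.finset_sum_apply, Finsupp.single_apply]
  rw [hmap]
  apply le_antisymm
  · intro r hr
    obtain ⟨m, hm⟩ := (mem_satur_aux _ _ _).1 hr
    rw [hf, mem_ideal_span_monomial_image] at hm
    rw [mem_ideal_span_monomial_image]
    intro xi hxi
    obtain ⟨s, hs, hle⟩ := hm (m • w + xi) (by
      rw [mem_support_iff, coeff_monomial_mul, one_mul]
      exact mem_support_iff.1 hxi)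
    refine ⟨_, ⟨s, hs, rfl⟩, ?_⟩
    intro x
    have := hle x
    by_cases hx : x ∈ W
    · simp [Finsupp.filter_apply, hx]
    · simpa [Finsupp.filter_apply, hx, hwx] using this
  · rw [Ideal.span_le]
    rintro _ ⟨_, ⟨s, hs, rfl⟩, rfl⟩
    refine (mem_satur_aux _ _ _).2 ⟨s.degree, ?_⟩
    rw [hf, mem_ideal_span_monomial_image]
    intro xi hxi
    rw [monomial_mul, one_mul] at hxi
    have := Finset.mem_singleton.1 (support_monomial_subset hxi)
    subst this
    refine ⟨s, hs, ?_⟩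
    intro x
    by_cases hx : x ∈ W
    · simpa [Finsupp.filter_apply, hx, hwx] using Finsupp.le_degree x s
    · simp [Finsupp.filter_apply, hx, hwx]

theorem isMonomialIdeal_pow {K : Type*} [Field K] {σ : Type*}
    (I : Ideal (MvPolynomial σ K)) (hI : IsMonomialIdeal I) (n : ℕ) :
    IsMonomialIdeal (I ^ n) := by
  induction n with
  | zero =>
    refine ⟨{0}, ?_⟩
    simp
  | succ n ih =>
    obtain ⟨T, hT⟩ := ih
    obtain ⟨S, rfl⟩ := hI
    refine ⟨Set.image2 (· + ·) T S, ?_⟩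
    rw [pow_succ, hT, Ideal.span_mul_span', ← Set.image2_mul, Set.image2_image_left,
      Set.image2_image_right, Set.image_image2]
    simp [monomial_mul]

/-- The localization of a power of a monomial ideal with respect to a set of variables `W`
equals the power of the localization: `(I^n)_W = (I_W)^n`, where `K_W = K : f^∞` with
`f = ∏_{x ∈ W} x`. -/
theorem satur_pow {K : Type*} [Field K] {σ : Type*}
    (I : Ideal (MvPolynomial σ K)) (hI : IsMonomialIdeal I) (W : Finset σ)
    (n : ℕ) (hn : 1 ≤ n) :
    (I ^ n).satur (∏ x ∈ W, X x) = (I.satur (∏ x ∈ W, (X x : MvPolynomial σ K))) ^ n := by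
  rw [satur_eq_map _ (isMonomialIdeal_pow I hI n), satur_eq_map I hI, Ideal.map_pow]
end

section
/- Let R = K[a,b,x,y] and I = (a^p x^p, a^k b^k, b^q y^q) with positive integers p, q, k. If min{p,q} ≥ 2k, then R/I^n is Cohen-Macaulay for all n ≥ 1. -/
open MvPolynomial

/-- `R/I` is Cohen–Macaulay: there is a regular sequence on `R/I` contained in the
maximal ideal generated by the variables whose length equals the Krull dimension of `R/I`. -/
def IsCMQuot {K : Type*} [Field K] {σ : Type*} (I : Ideal (MvPolynomial σ K)) : Prop :=
  ∃ rs : List (MvPolynomial σ K),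
    (∀ r ∈ rs, r ∈ Ideal.span (Set.range (X : σ → MvPolynomial σ K))) ∧
    RingTheory.Sequence.IsRegular (MvPolynomial σ K ⧸ I) rs ∧
    (rs.length : WithBot (WithTop ℕ)) = ringKrullDim (MvPolynomial σ K ⧸ I)

theorem nzd_aux {R : Type*} [CommRing R] (L : Ideal R) (u v : R) (N : ℕ)
    (h0 : u ^ N * v ^ N ∈ L)
    (h1 : ∀ (f : R) (M : ℕ), u ^ M * f ∈ L → v ^ M * f ∈ L → f ∈ L)
    (f : R) (hf : (v - u) * f ∈ L) : f ∈ L := by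
  have key : ∀ j : ℕ, (v ^ j - u ^ j) * f ∈ L := by
    intro j
    obtain ⟨c, hc⟩ := sub_dvd_pow_sub_pow v u j
    rw [hc, mul_right_comm]
    exact L.mul_mem_right _ hf
  have e : u ^ N * v ^ N * f ∈ L := L.mul_mem_right _ h0
  refine h1 f (N + N) ?_ ?_
  · have := L.sub_mem e (L.mul_mem_left (u ^ N) (key N))
    convert this using 1
    ring
  · have := L.add_mem e (L.mul_mem_left (v ^ N) (key N))
    convert this using 1
    ring

theorem span_pow_aux {K : Type*} [Field K] {σ : Type*} (g1 g2 g3 : σ →₀ ℕ) (n : ℕ) :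
    (Ideal.span ({monomial g1 1, monomial g2 1, monomial g3 1} : Set (MvPolynomial σ K))) ^ n =
      Ideal.span ((fun s => monomial s (1 : K)) ''
        {e | ∃ i j l : ℕ, i + j + l = n ∧ e = i • g1 + j • g2 + l • g3}) := by
  induction n with
  | zero =>
    rw [pow_zero, Ideal.one_eq_top, eq_comm, Ideal.eq_top_iff_one]
    exact Ideal.subset_span ⟨0, ⟨0, 0, 0, rfl, by simp⟩, rfl⟩
  | succ n ih =>
    rw [pow_succ, ih, Ideal.span_mul_span']
    apply le_antisymm
    · rw [Ideal.span_le]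
      rintro _ ⟨_, ⟨e, ⟨i, j, l, hn, rfl⟩, rfl⟩, g, hg, rfl⟩
      apply Ideal.subset_span
      simp only [Set.mem_insert_iff, Set.mem_singleton_iff] at hg
      rcases hg with rfl | rfl | rfl
      · exact ⟨_, ⟨i + 1, j, l, by omega, rfl⟩, by
          simp only [monomial_mul, mul_one]; congr 2; simp only [add_smul, one_smul]; abel⟩
      · exact ⟨_, ⟨i, j + 1, l, by omega, rfl⟩, by
          simp only [monomial_mul, mul_one]; congr 2; simp only [add_smul, one_smul]; abel⟩
      · exact ⟨_, ⟨i, j, l + 1, by omega, rfl⟩, by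
          simp only [monomial_mul, mul_one]; congr 2; simp only [add_smul, one_smul]; abel⟩
    · rw [Ideal.span_le]
      rintro _ ⟨e, ⟨i, j, l, hn, rfl⟩, rfl⟩
      apply Ideal.subset_span
      rcases i with _ | i
      · rcases j with _ | j
        · rcases l with _ | l
          · omega
          · exact ⟨_, ⟨_, ⟨0, 0, l, by omega, rfl⟩, rfl⟩, monomial g3 1, by simp, by
              simp only [monomial_mul, mul_one]; congr 2; simp only [add_smul, one_smul]; abel⟩
        · exact ⟨_, ⟨_, ⟨0, j, l, by omega, rfl⟩, rfl⟩, monomial g2 1, by simp, by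
              simp only [monomial_mul, mul_one]; congr 2; simp only [add_smul, one_smul]; abel⟩
      · exact ⟨_, ⟨_, ⟨i, j, l, by omega, rfl⟩, rfl⟩, monomial g1 1, by simp, by
              simp only [monomial_mul, mul_one]; congr 2; simp only [add_smul, one_smul]; abel⟩

theorem mem_pow_aux {K : Type*} [Field K] {σ : Type*} (g1 g2 g3 : σ →₀ ℕ) (n : ℕ)
    (f : MvPolynomial σ K) :
    f ∈ (Ideal.span ({monomial g1 1, monomial g2 1, monomial g3 1} :
      Set (MvPolynomial σ K))) ^ n ↔
      ∀ e ∈ f.support, ∃ i j l : ℕ, i + j + l = n ∧ ∀ s, i * g1 s + j * g2 s + l * g3 s ≤ e s := by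
  rw [span_pow_aux, mem_ideal_span_monomial_image]
  refine forall₂_congr fun e _ => ⟨?_, ?_⟩
  · rintro ⟨_, ⟨i, j, l, h, rfl⟩, h2⟩
    exact ⟨i, j, l, h, fun s => by simpa using h2 s⟩
  · rintro ⟨i, j, l, h, h2⟩
    exact ⟨_, ⟨i, j, l, h, rfl⟩, fun s => by simpa using h2 s⟩

theorem supp_aux {K : Type*} [Field K] {σ : Type*} (i : σ) (M : ℕ) (f : MvPolynomial σ K)
    (e : σ →₀ ℕ) (he : e ∈ f.support) : Finsupp.single i M + e ∈ (X i ^ M * f).support := by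
  rw [mem_support_iff, X_pow_eq_monomial, coeff_monomial_mul, one_mul]
  exact mem_support_iff.1 he

/-- The general reduction: combinatorial condition implies difference of variables is regular. -/
theorem nzd_mono {K : Type*} [Field K] {σ : Type*} (g1 g2 g3 : σ →₀ ℕ) (n N : ℕ) (u v : σ)
    (h0 : (X u ^ N * X v ^ N : MvPolynomial σ K) ∈
      (Ideal.span ({monomial g1 1, monomial g2 1, monomial g3 1} : Set (MvPolynomial σ K))) ^ n)
    (h1 : ∀ (e : σ →₀ ℕ) (M : ℕ),
      (∃ i j l : ℕ, i + j + l = n ∧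
        ∀ s, i * g1 s + j * g2 s + l * g3 s ≤ (Finsupp.single u M + e) s) →
      (∃ i j l : ℕ, i + j + l = n ∧
        ∀ s, i * g1 s + j * g2 s + l * g3 s ≤ (Finsupp.single v M + e) s) →
      (∃ i j l : ℕ, i + j + l = n ∧ ∀ s, i * g1 s + j * g2 s + l * g3 s ≤ e s))
    (f : MvPolynomial σ K)
    (hf : (X v - X u) * f ∈ (Ideal.span ({monomial g1 1, monomial g2 1, monomial g3 1} :
      Set (MvPolynomial σ K))) ^ n) :
    f ∈ (Ideal.span ({monomial g1 1, monomial g2 1, monomial g3 1} :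
      Set (MvPolynomial σ K))) ^ n := by
  refine nzd_aux _ _ _ N h0 ?_ f hf
  intro f M hu hv
  rw [mem_pow_aux] at hu hv ⊢
  intro e he
  exact h1 e M (hu _ (supp_aux u M f e he)) (hv _ (supp_aux v M f e he))

theorem comb_norm (k α ξ β η n s t x y : ℕ) (hα : 2 * k ≤ α) (hβ : 2 * k ≤ β)
    (h : ∃ i j l : ℕ, i + j + l = n ∧ i * α + j * k ≤ s ∧ j * k + l * β ≤ t ∧
      i * ξ ≤ x ∧ l * η ≤ y) :
    (∃ i j : ℕ, i + j = n ∧ i * α + j * k ≤ s ∧ j * k ≤ t ∧ i * ξ ≤ x) ∨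
    (∃ j l : ℕ, j + l = n ∧ j * k ≤ s ∧ j * k + l * β ≤ t ∧ l * η ≤ y) := by
  obtain ⟨i, j, l, hn, h1, h2, h3, h4⟩ := h
  obtain ⟨α, rfl⟩ := Nat.exists_eq_add_of_le hα
  obtain ⟨β, rfl⟩ := Nat.exists_eq_add_of_le hβ
  rcases le_total l i with hl | hl
  · obtain ⟨d, rfl⟩ := Nat.exists_eq_add_of_le hl
    refine Or.inl ⟨d, j + 2 * l, by omega, ?_, ?_, ?_⟩ <;> nlinarith [Nat.zero_le (l * α), Nat.zero_le (l * β), Nat.zero_le (l * ξ)]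
  · obtain ⟨d, rfl⟩ := Nat.exists_eq_add_of_le hl
    refine Or.inr ⟨j + 2 * i, d, by omega, ?_, ?_, ?_⟩ <;> nlinarith [Nat.zero_le (i * α), Nat.zero_le (i * β), Nat.zero_le (i * η)]

theorem comb (k α ξ β η n M s t x y : ℕ) (hα : 2 * k ≤ α) (hβ : 2 * k ≤ β)
    (h : ∃ i j l : ℕ, i + j + l = n ∧ i * α + j * k ≤ M + s ∧ j * k + l * β ≤ t ∧
      i * ξ ≤ x ∧ l * η ≤ y)
    (h' : ∃ i j l : ℕ, i + j + l = n ∧ i * α + j * k ≤ s ∧ j * k + l * β ≤ t ∧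
      i * ξ ≤ M + x ∧ l * η ≤ y) :
    ∃ i j l : ℕ, i + j + l = n ∧ i * α + j * k ≤ s ∧ j * k + l * β ≤ t ∧
      i * ξ ≤ x ∧ l * η ≤ y := by
  rcases comb_norm _ _ _ _ _ _ _ _ _ _ hα hβ h' with
    ⟨i', j', hn', h1', h2', h3'⟩ | ⟨j', l', hn', h1', h2', h3'⟩
  · obtain ⟨α, rfl⟩ := Nat.exists_eq_add_of_le hα
    rcases comb_norm _ _ _ _ _ _ _ _ _ _ hα hβ h with
      ⟨i, j, hn, h1, h2, h3⟩ | ⟨j, l, hn, h1, h2, h3⟩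
    · rcases le_total i' i with hi | hi
      · refine ⟨i', j', 0, by omega, h1', by omega, ?_, by omega⟩
        exact (Nat.mul_le_mul_right _ hi).trans h3
      · refine ⟨i, j, 0, by omega, ?_, by omega, h3, by omega⟩
        obtain ⟨d, rfl⟩ := Nat.exists_eq_add_of_le hi
        obtain rfl : j = j' + d := by omega
        nlinarith [Nat.zero_le (d * α), Nat.zero_le (d * k)]
    · obtain ⟨β, rfl⟩ := Nat.exists_eq_add_of_le hβ
      refine ⟨0, n, 0, by omega, ?_, ?_, by omega, by omega⟩
      · subst hn'
        nlinarith [Nat.zero_le (i' * α), Nat.zero_le (i' * k)]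
      · subst hn
        nlinarith [Nat.zero_le (l * β), Nat.zero_le (l * k)]
  · exact ⟨0, j', l', by omega, by omega, h2', by omega, h3'⟩

theorem nzd_I {K : Type*} [Field K] (p q k : ℕ) (hp : 2 * k ≤ p) (hq : 2 * k ≤ q) (n : ℕ)
    (f : MvPolynomial (Fin 4) K)
    (hf : (X 2 - X 0) * f ∈ (Ideal.span ({(X 0) ^ p * (X 2) ^ p, (X 0) ^ k * (X 1) ^ k,
        (X 1) ^ q * (X 3) ^ q} : Set (MvPolynomial (Fin 4) K))) ^ n) :
    f ∈ (Ideal.span ({(X 0) ^ p * (X 2) ^ p, (X 0) ^ k * (X 1) ^ k,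
        (X 1) ^ q * (X 3) ^ q} : Set (MvPolynomial (Fin 4) K))) ^ n := by
  have h0 : (X 0 ^ (p * n) * X 2 ^ (p * n) : MvPolynomial (Fin 4) K) ∈
      (Ideal.span ({(X 0) ^ p * (X 2) ^ p, (X 0) ^ k * (X 1) ^ k,
        (X 1) ^ q * (X 3) ^ q} : Set (MvPolynomial (Fin 4) K))) ^ n := by
    have e : (X 0 ^ (p * n) * X 2 ^ (p * n) : MvPolynomial (Fin 4) K) =
        (X 0 ^ p * X 2 ^ p) ^ n := by rw [mul_pow, pow_mul, pow_mul]
    rw [e]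
    refine Ideal.pow_mem_pow (Ideal.subset_span ?_) n
    simp
  simp only [X_pow_eq_monomial, monomial_mul, mul_one] at hf h0 ⊢
  refine nzd_mono _ _ _ n (p * n) 0 2 (by simpa only [X_pow_eq_monomial, monomial_mul, mul_one] using h0) ?_ f hf
  rintro e M h1 h2
  simp [Fin.forall_fin_succ, Finsupp.single_apply] at h1 h2 ⊢
  exact comb k p p q q n M _ _ _ _ hp hq h1 h2

theorem nzd_J {K : Type*} [Field K] (p q k : ℕ) (hp : 2 * k ≤ p) (hq : 2 * k ≤ q) (n : ℕ)
    (f : MvPolynomial (Fin 4) K)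
    (hf : (X 3 - X 1) * f ∈ (Ideal.span ({(X 0) ^ p * (X 0) ^ p, (X 0) ^ k * (X 1) ^ k,
        (X 1) ^ q * (X 3) ^ q} : Set (MvPolynomial (Fin 4) K))) ^ n) :
    f ∈ (Ideal.span ({(X 0) ^ p * (X 0) ^ p, (X 0) ^ k * (X 1) ^ k,
        (X 1) ^ q * (X 3) ^ q} : Set (MvPolynomial (Fin 4) K))) ^ n := by
  have h0 : (X 1 ^ (q * n) * X 3 ^ (q * n) : MvPolynomial (Fin 4) K) ∈
      (Ideal.span ({(X 0) ^ p * (X 0) ^ p, (X 0) ^ k * (X 1) ^ k,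
        (X 1) ^ q * (X 3) ^ q} : Set (MvPolynomial (Fin 4) K))) ^ n := by
    have e : (X 1 ^ (q * n) * X 3 ^ (q * n) : MvPolynomial (Fin 4) K) =
        (X 1 ^ q * X 3 ^ q) ^ n := by rw [mul_pow, pow_mul, pow_mul]
    rw [e]
    refine Ideal.pow_mem_pow (Ideal.subset_span ?_) n
    simp
  simp only [X_pow_eq_monomial, monomial_mul, mul_one] at hf h0 ⊢
  refine nzd_mono _ _ _ n (q * n) 1 3 (by simpa only [X_pow_eq_monomial, monomial_mul, mul_one] using h0) ?_ f hf
  rintro e M h1 h2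
  simp [Fin.forall_fin_succ, Finsupp.single_apply] at h1 h2 ⊢
  obtain ⟨i, j, l, hn, g1, g2, h3⟩ := h1
  obtain ⟨i', j', l', hn', h1', h2', h3'⟩ := h2
  obtain ⟨i, j, l, hn, h1, h2, h3, h4⟩ := comb k q q (p + p) 0 n M (e 1) (e 0) (e 3) 0 hq (by omega)
    ⟨l, j, i, by omega, by omega, by omega, h3, by omega⟩
    ⟨l', j', i', by omega, by omega, by omega, h3', by omega⟩
  exact ⟨l, j, i, by omega, by omega, by omega, h3⟩

theorem mem_quot_aux {R : Type*} [CommRing R] (I J : Ideal R) (g : R) :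
    (Ideal.Quotient.mk I g) ∈ (J • ⊤ : Submodule R (R ⧸ I)) ↔ g ∈ J ⊔ I := by
  rw [Ideal.smul_top_eq_map, Submodule.restrictScalars_mem]
  exact Ideal.mem_quotient_iff_mem_sup

theorem regular_aux {R : Type*} [CommRing R] (I : Ideal R) (r s : R)
    (h1 : ∀ g, r * g ∈ I → g ∈ I)
    (h2 : ∀ g, s * g ∈ Ideal.span {r} ⊔ I → g ∈ Ideal.span {r} ⊔ I)
    (h3 : 1 ∉ Ideal.ofList [r, s] ⊔ I) :
    RingTheory.Sequence.IsRegular (R ⧸ I) [r, s] := by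
  refine ⟨⟨?_⟩, ?_⟩
  · intro i hi
    rw [isSMulRegular_quotient_iff_mem_of_smul_mem]
    intro z hz
    obtain ⟨g, rfl⟩ := Ideal.Quotient.mk_surjective z
    rw [mem_quot_aux]
    have hi' : i < 2 := hi
    interval_cases i
    · have hz' := (mem_quot_aux _ _ (r * g)).1 hz
      simp only [List.take_zero, Ideal.ofList_nil, bot_sup_eq] at hz' ⊢
      exact h1 g hz'
    · have hz' := (mem_quot_aux _ _ (s * g)).1 hz
      simp only [List.take_succ_cons, List.take_zero, Ideal.ofList_singleton] at hz' ⊢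
      exact h2 g hz'
  · intro htop
    have h4 : (Ideal.Quotient.mk I 1) ∈ (⊤ : Submodule R (R ⧸ I)) := Submodule.mem_top
    rw [htop, mem_quot_aux] at h4
    exact h3 h4

theorem dim_aux {K : Type*} [Field K] (Q : Ideal (MvPolynomial (Fin 4) K)) (i j : Fin 4)
    (h : ∀ s, s = i ∨ s = j ∨ X s ∈ Q) : ringKrullDim (MvPolynomial (Fin 4) K ⧸ Q) ≤ 2 := by
  let φ : MvPolynomial (Fin 2) K →ₐ[K] (MvPolynomial (Fin 4) K ⧸ Q) :=
    aeval ![Ideal.Quotient.mkₐ K Q (X i), Ideal.Quotient.mkₐ K Q (X j)]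
  have hφ : Function.Surjective φ := by
    have key : ∀ f : MvPolynomial (Fin 4) K, Ideal.Quotient.mkₐ K Q f ∈ φ.range := by
      intro f
      induction f using MvPolynomial.induction_on with
      | C a => exact (φ.range.algebraMap_mem a)
      | add f g hf hg => rw [map_add]; exact add_mem hf hg
      | mul_X f s hf =>
        rw [map_mul]
        refine mul_mem hf ?_
        rcases h s with rfl | rfl | hs
        · exact ⟨X 0, by simp [φ]⟩
        · exact ⟨X 1, by simp [φ]⟩
        · have : Ideal.Quotient.mkₐ K Q (X s) = 0 := Ideal.Quotient.eq_zero_iff_mem.2 hs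
          rw [this]; exact zero_mem _
    intro z
    obtain ⟨f, rfl⟩ := Ideal.Quotient.mk_surjective z
    exact key f
  refine (ringKrullDim_le_of_surjective φ.toRingHom hφ).trans ?_
  rw [MvPolynomial.ringKrullDim_of_isNoetherianRing]
  simp

theorem dim_ge_aux {K : Type*} [Field K] (L : Ideal (MvPolynomial (Fin 4) K))
    (h : L ≤ Ideal.span {X 0, X 1}) : 2 ≤ ringKrullDim (MvPolynomial (Fin 4) K ⧸ L) := by
  let φ : MvPolynomial (Fin 4) K →ₐ[K] MvPolynomial (Fin 2) K := aeval ![0, 0, X 0, X 1]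
  have hL : ∀ f ∈ L, φ f = 0 := by
    have : L ≤ RingHom.ker φ := by
      refine h.trans (Ideal.span_le.2 ?_)
      rintro _ (rfl | rfl) <;> simp [φ, RingHom.mem_ker]
    exact fun f hf => this hf
  have hφ : Function.Surjective φ := by
    have : φ.comp (aeval ![X 2, X 3]) = AlgHom.id K _ := by
      ext s
      fin_cases s <;> simp [φ]
    intro z
    exact ⟨_, DFunLike.congr_fun this z⟩
  have := ringKrullDim_le_of_surjective (Ideal.Quotient.lift L φ.toRingHom hL)
    (Ideal.Quotient.lift_surjective_of_surjective _ _ hφ)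
  rw [MvPolynomial.ringKrullDim_of_isNoetherianRing] at this
  simpa using this

theorem dim_le_aux {R : Type*} [CommRing R] (L : Ideal R) (d : ℕ)
    (h : ∀ P : Ideal R, P.IsPrime → L ≤ P → ringKrullDim (R ⧸ P) ≤ d) :
    ringKrullDim (R ⧸ L) ≤ d := by
  rw [ringKrullDim_quotient]
  refine iSup_le fun l => ?_
  have h2 := h l.head.1.asIdeal l.head.1.2 l.head.2
  rw [ringKrullDim_quotient] at h2
  refine le_trans ?_ h2
  let l' : LTSeries (PrimeSpectrum.zeroLocus (R := R) (l.head.1.asIdeal : Set R)) :=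
    { length := l.length
      toFun := fun i => ⟨(l i).1, LTSeries.head_le l i⟩
      step := fun i => l.step i }
  exact le_iSup (fun p : LTSeries _ => (p.length : WithBot ℕ∞)) l'

theorem dim_main {K : Type*} [Field K] (p q k : ℕ)
    (hp : 0 < p) (hq : 0 < q) (hk : 0 < k) (n : ℕ) (hn : 1 ≤ n) :
    ringKrullDim (MvPolynomial (Fin 4) K ⧸
      (Ideal.span ({(X 0) ^ p * (X 2) ^ p, (X 0) ^ k * (X 1) ^ k,
        (X 1) ^ q * (X 3) ^ q} : Set (MvPolynomial (Fin 4) K))) ^ n) = 2 := by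
  apply le_antisymm
  · refine dim_le_aux _ 2 fun P hP hL => ?_
    have hI := hP.le_of_pow_le hL
    rw [Ideal.span_le] at hI
    have h1 : X 0 ^ p * X 2 ^ p ∈ P := hI (by simp)
    have h2 : X 0 ^ k * X 1 ^ k ∈ P := hI (by simp)
    have h3 : X 1 ^ q * X 3 ^ q ∈ P := hI (by simp)
    have h1' := (hP.mem_or_mem h1).imp (hP.mem_of_pow_mem _) (hP.mem_of_pow_mem _)
    have h2' := (hP.mem_or_mem h2).imp (hP.mem_of_pow_mem _) (hP.mem_of_pow_mem _)
    have h3' := (hP.mem_or_mem h3).imp (hP.mem_of_pow_mem _) (hP.mem_of_pow_mem _)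
    have : (X 0 ∈ P ∧ X 1 ∈ P) ∨ (X 0 ∈ P ∧ X 3 ∈ P) ∨ (X 1 ∈ P ∧ X 2 ∈ P) := by tauto
    rcases this with ⟨ha, hb⟩ | ⟨ha, hb⟩ | ⟨ha, hb⟩
    · exact dim_aux P 2 3 (by simp [Fin.forall_fin_succ, ha, hb])
    · exact dim_aux P 1 2 (by simp [Fin.forall_fin_succ, ha, hb])
    · exact dim_aux P 0 3 (by simp [Fin.forall_fin_succ, ha, hb])
  · apply dim_ge_aux
    refine (Ideal.pow_le_self (by omega)).trans (Ideal.span_le.2 ?_)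
    have ha : (X 0 : MvPolynomial (Fin 4) K) ∈ Ideal.span {X 0, (X 1 : MvPolynomial (Fin 4) K)} :=
      Ideal.subset_span (by simp)
    have hb : (X 1 : MvPolynomial (Fin 4) K) ∈ Ideal.span {(X 0 : MvPolynomial (Fin 4) K), X 1} :=
      Ideal.subset_span (by simp)
    rintro _ (rfl | rfl | rfl)
    · exact Ideal.mul_mem_right _ _ (Ideal.pow_mem_of_mem _ ha _ hp)
    · exact Ideal.mul_mem_right _ _ (Ideal.pow_mem_of_mem _ ha _ hk)
    · exact Ideal.mul_mem_right _ _ (Ideal.pow_mem_of_mem _ hb _ hq)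

theorem mem_subst_aux {K : Type*} [Field K] (p q k n : ℕ) (g : MvPolynomial (Fin 4) K) :
    g ∈ Ideal.span {X 2 - X 0} ⊔ (Ideal.span ({(X 0) ^ p * (X 2) ^ p, (X 0) ^ k * (X 1) ^ k,
        (X 1) ^ q * (X 3) ^ q} : Set (MvPolynomial (Fin 4) K))) ^ n ↔
    aeval (R := K) ![X 0, X 1, X 0, X 3] g ∈
      (Ideal.span ({(X 0) ^ p * (X 0) ^ p, (X 0) ^ k * (X 1) ^ k,
        (X 1) ^ q * (X 3) ^ q} : Set (MvPolynomial (Fin 4) K))) ^ n := by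
  set φ : MvPolynomial (Fin 4) K →ₐ[K] MvPolynomial (Fin 4) K := aeval ![X 0, X 1, X 0, X 3] with hφ
  set D : Ideal (MvPolynomial (Fin 4) K) := Ideal.span {X 2 - X 0} with hD
  set I := Ideal.span ({(X 0) ^ p * (X 2) ^ p, (X 0) ^ k * (X 1) ^ k,
        (X 1) ^ q * (X 3) ^ q} : Set (MvPolynomial (Fin 4) K)) with hI
  set J := Ideal.span ({(X 0) ^ p * (X 0) ^ p, (X 0) ^ k * (X 1) ^ k,
        (X 1) ^ q * (X 3) ^ q} : Set (MvPolynomial (Fin 4) K)) with hJ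
  have hmap : I.map φ = J := by
    rw [hI, Ideal.map_span, hJ]
    congr 1
    simp [Set.image_insert_eq, hφ]
  have hDmap : D.map φ = ⊥ := by
    rw [hD, Ideal.map_span]
    simp [hφ]
  have hmapmk : (I.map (Ideal.Quotient.mk D)) = J.map (Ideal.Quotient.mk D) := by
    have e : Ideal.Quotient.mk D (X 2) = Ideal.Quotient.mk D (X 0) :=
      Ideal.Quotient.eq.2 (Ideal.subset_span rfl)
    rw [hI, hJ, Ideal.map_span, Ideal.map_span]
    simp [Set.image_insert_eq, e]
  have hmk : ∀ f, Ideal.Quotient.mk D (φ f) = Ideal.Quotient.mk D f := by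
    have e : Ideal.Quotient.mk D (X 2) = Ideal.Quotient.mk D (X 0) :=
      Ideal.Quotient.eq.2 (Ideal.subset_span rfl)
    have : (Ideal.Quotient.mkₐ K D).comp φ = Ideal.Quotient.mkₐ K D := by
      ext s
      fin_cases s <;> simp [hφ, e]
    exact fun f => DFunLike.congr_fun this f
  constructor
  · intro h
    have := Ideal.mem_map_of_mem φ h
    rwa [Ideal.map_sup, hDmap, bot_sup_eq, Ideal.map_pow, hmap] at this
  · intro h
    have := Ideal.mem_map_of_mem (Ideal.Quotient.mk D) h
    rw [hmk, Ideal.map_pow, ← hmapmk, ← Ideal.map_pow, Ideal.mem_quotient_iff_mem_sup, sup_comm] at this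
    exact this

/-- For the weighted edge ideal `I = (a^p x^p, a^k b^k, b^q y^q)` of the path `x–a–b–y`
in `R = K[a,b,x,y]`: if `min{p,q} ≥ 2k` then `R/I^n` is Cohen–Macaulay for all `n ≥ 1`.
Here `a = X 0`, `b = X 1`, `x = X 2`, `y = X 3`. -/
theorem cm_all_powers_path {K : Type*} [Field K] (p q k : ℕ)
    (hp : 0 < p) (hq : 0 < q) (hk : 0 < k) (h : 2 * k ≤ min p q) :
    ∀ n : ℕ, 1 ≤ n →
      IsCMQuot ((Ideal.span ({(X 0) ^ p * (X 2) ^ p, (X 0) ^ k * (X 1) ^ k,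
        (X 1) ^ q * (X 3) ^ q} : Set (MvPolynomial (Fin 4) K))) ^ n) := by
  intro n hn
  have hp' : 2 * k ≤ p := h.trans (min_le_left _ _)
  have hq' : 2 * k ≤ q := h.trans (min_le_right _ _)
  refine ⟨[X 2 - X 0, X 3 - X 1], ?_, regular_aux _ _ _ ?_ ?_ ?_, ?_⟩
  · have hX : ∀ i : Fin 4, (X i : MvPolynomial (Fin 4) K) ∈
        Ideal.span (Set.range (X : Fin 4 → MvPolynomial (Fin 4) K)) :=
      fun i => Ideal.subset_span ⟨i, rfl⟩
    intro r hr
    simp only [List.mem_cons, List.not_mem_nil, or_false] at hr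
    rcases hr with rfl | rfl
    · exact sub_mem (hX _) (hX _)
    · exact sub_mem (hX _) (hX _)
  · exact fun g hg => nzd_I p q k hp' hq' n g hg
  · intro g hg
    rw [mem_subst_aux] at hg ⊢
    refine nzd_J p q k hp' hq' n _ ?_
    simpa using hg
  · intro h2
    have h3 : Ideal.ofList [X 2 - X 0, X 3 - X 1] ⊔ (Ideal.span ({(X 0) ^ p * (X 2) ^ p,
        (X 0) ^ k * (X 1) ^ k, (X 1) ^ q * (X 3) ^ q} : Set (MvPolynomial (Fin 4) K))) ^ n ≤
        RingHom.ker (constantCoeff (σ := Fin 4) (R := K)) := by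
      refine sup_le (Ideal.span_le.2 ?_) ((Ideal.pow_le_self (by omega)).trans (Ideal.span_le.2 ?_))
      · intro r hr
        simp only [List.mem_cons, List.not_mem_nil, or_false, Set.mem_ofPred_eq] at hr
        rcases hr with rfl | rfl <;> simp [RingHom.mem_ker]
      · rintro _ (rfl | rfl | rfl) <;> simp [RingHom.mem_ker, hp.ne', hq.ne', hk.ne']
    have h4 := h3 h2
    simp [RingHom.mem_ker] at h4
  · rw [dim_main p q k hp hq hk n hn]
    rfl
end

section
/- Let R = K[a,b,x,y] and I = (a^p x^p, a^k b^k, b^q y^q) with positive integers p, q, k. If R/I^n is Cohen-Macaulay for some n ≥ 2, then min{p, q} ≥ 2k. -/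
open MvPolynomial

lemma two_le_dim {K : Type*} [Field K] (J : Ideal (MvPolynomial (Fin 4) K))
    (hJ : J ≤ RingHom.ker (aeval (R := K) (![0, 0, X 0, X 1] : Fin 4 → MvPolynomial (Fin 2) K)).toRingHom) :
    (2 : WithBot (WithTop ℕ)) ≤ ringKrullDim (MvPolynomial (Fin 4) K ⧸ J) := by
  set φ := (aeval (R := K) (![0, 0, X 0, X 1] : Fin 4 → MvPolynomial (Fin 2) K)) with hφ
  have hs : Function.Surjective φ := by
    intro f
    refine ⟨aeval (R := K) (![X 2, X 3] : Fin 2 → MvPolynomial (Fin 4) K) f, ?_⟩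
    have : φ.comp (aeval (R := K) (![X 2, X 3] : Fin 2 → MvPolynomial (Fin 4) K)) = AlgHom.id K _ := by
      apply MvPolynomial.algHom_ext
      intro i
      fin_cases i <;> simp [hφ]
    exact DFunLike.congr_fun this f
  have h1 := ringKrullDim_le_of_surjective (Ideal.Quotient.lift J φ.toRingHom (fun a ha => hJ ha))
    (Ideal.Quotient.lift_surjective_of_surjective _ _ hs)
  refine le_trans ?_ h1
  have := MvPolynomial.ringKrullDim_of_isNoetherianRing (R := K) (ι := Fin 2)
  rw [this]
  simp
  exact le_rfl

lemma ext_lemma {K : Type*} [Field K] (J : Ideal (MvPolynomial (Fin 4) K))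
    (hd : (2 : WithBot (WithTop ℕ)) ≤ ringKrullDim (MvPolynomial (Fin 4) K ⧸ J))
    (hCM : IsCMQuot J) (g : Fin 4 → MvPolynomial (Fin 4) K)
    (hg : ∀ i j, X i * g j - X j * g i ∈ J) : ∃ u, ∀ i, g i - X i * u ∈ J := by
  obtain ⟨rs, hm, hr, hl⟩ := hCM
  rw [← hl] at hd
  have hl2 : 2 ≤ rs.length := by exact_mod_cast hd
  obtain ⟨r, rs, rfl⟩ := List.exists_cons_of_length_pos (by omega : 0 < rs.length)
  obtain ⟨t, rs, rfl⟩ := List.exists_cons_of_length_pos (by simp at hl2; omega : 0 < rs.length)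
  have hw := hr.toIsWeaklyRegular
  rw [RingTheory.Sequence.isWeaklyRegular_cons_iff,
    RingTheory.Sequence.isWeaklyRegular_cons_iff] at hw
  obtain ⟨hr1, ht1, -⟩ := hw
  have hrm := hm r (by simp)
  have htm := hm t (by simp)
  rw [Ideal.mem_span_range_iff_exists_fun] at hrm htm
  obtain ⟨c, hc⟩ := hrm
  obtain ⟨d, hd⟩ := htm
  have hr2 := (isSMulRegular_quotient_iff_mem_of_smul_mem _ _).1 hr1
  have ht2 := (isSMulRegular_quotient_iff_mem_of_smul_mem _ _).1 ht1
  have e1 : t * (∑ i, c i * g i) - r * (∑ i, d i * g i) ∈ J := by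
    have : t * (∑ i, c i * g i) - r * (∑ i, d i * g i)
        = ∑ i, ∑ j, c i * d j * (X j * g i - X i * g j) := by
      rw [← hc, ← hd]
      simp only [Fin.sum_univ_four]
      ring
    rw [this]
    exact Ideal.sum_mem _ fun i _ => Ideal.sum_mem _ fun j _ => Ideal.mul_mem_left _ _ (hg j i)
  have e2 := ht2 (Ideal.Quotient.mk J (∑ i, c i * g i)) (by
    rw [Submodule.mem_smul_pointwise_iff_exists]
    refine ⟨Ideal.Quotient.mk J (∑ i, d i * g i), trivial, ?_⟩
    change Ideal.Quotient.mk J (r * _) = Ideal.Quotient.mk J (t * _)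
    rw [eq_comm, Ideal.Quotient.eq]
    exact e1)
  rw [Submodule.mem_smul_pointwise_iff_exists] at e2
  obtain ⟨u, -, hu⟩ := e2
  obtain ⟨u, rfl⟩ := Ideal.Quotient.mk_surjective u
  change Ideal.Quotient.mk J (r * _) = Ideal.Quotient.mk J _ at hu
  rw [eq_comm, Ideal.Quotient.eq] at hu
  refine ⟨u, fun j => hr2 _ ?_⟩
  have : r • (g j - X j * u) = X j * (∑ i, c i * g i - r * u)
      + ∑ i, c i * (X i * g j - X j * g i) := by
    rw [← hc]
    simp only [Fin.sum_univ_four, smul_eq_mul]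
    ring
  rw [this]
  exact J.add_mem (Ideal.mul_mem_left _ _ hu)
    (Ideal.sum_mem _ fun i _ => Ideal.mul_mem_left _ _ (hg i j))

lemma crit {K : Type*} [Field K] (J : Ideal (MvPolynomial (Fin 4) K))
    (hd : (2 : WithBot (WithTop ℕ)) ≤ ringKrullDim (MvPolynomial (Fin 4) K ⧸ J))
    (hCM : IsCMQuot J) (P : (Fin 4 →₀ ℕ) → Prop)
    (h1 : ∀ s, P s → monomial s 1 ∈ J) (h2 : ∀ f ∈ J, ∀ s, coeff s f ≠ 0 → P s)
    (S : Fin 4 → Prop) (m : Fin 4 →₀ ℕ)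
    (hS : ∀ i j, S i → ¬ S j → P (Finsupp.single i 1 + (Finsupp.single j 1 + m)))
    (i j : Fin 4) (hi : S i) (hj : ¬ S j)
    (hPi : ¬ P (Finsupp.single i 1 + m)) (hPj : ¬ P (Finsupp.single j 1 + m)) : False := by
  classical
  have key : ∀ i j, S i → ¬ S j → X i * (X j * monomial m 1) ∈ J := by
    intro i j hi hj
    have := h1 _ (hS i j hi hj)
    simpa [X, monomial_mul] using this
  obtain ⟨u, hu⟩ := ext_lemma J hd hCM (fun i => if S i then X i * monomial m 1 else 0) (by
    intro i j
    by_cases hi : S i <;> by_cases hj : S j <;> simp only [hi, hj, if_true, if_false]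
    · convert J.zero_mem using 1
      ring
    · simpa [mul_left_comm] using key i j hi hj
    · simpa using key j i hj hi |> fun h => by rwa [mul_left_comm] at h
    · simp)
  have a1 := hu i
  have a2 := hu j
  simp only [hi, hj, if_true, if_false] at a1 a2
  rw [← mul_sub] at a1
  have b1 := mt (h2 _ a1 _) hPi
  have b2 := mt (h2 _ a2 _) hPj
  rw [zero_sub, coeff_neg] at b2
  rw [coeff_X_mul] at b1 b2
  simp only [not_not, coeff_sub, coeff_monomial, if_true, neg_eq_zero] at b1 b2
  rw [b2] at b1
  simp at b1

/-- exponent condition for membership in the power -/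
def PCond (p q k n : ℕ) (s : Fin 4 →₀ ℕ) : Prop :=
  ∃ i j l, i + j + l = n ∧ p * i + k * j ≤ s 0 ∧ k * j + q * l ≤ s 1 ∧ p * i ≤ s 2 ∧ q * l ≤ s 3

lemma monomial_eq4 {K : Type*} [Field K] (s : Fin 4 →₀ ℕ) :
    (monomial s 1 : MvPolynomial (Fin 4) K) = X 0 ^ s 0 * X 1 ^ s 1 * X 2 ^ s 2 * X 3 ^ s 3 := by
  rw [monomial_eq, Finsupp.prod_fintype _ _ (by simp)]
  simp [Fin.prod_univ_four]

lemma mem_of_PCond {K : Type*} [Field K] (p q k n : ℕ) (s : Fin 4 →₀ ℕ) (h : PCond p q k n s) :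
    (monomial s 1 : MvPolynomial (Fin 4) K) ∈ (Ideal.span ({(X 0) ^ p * (X 2) ^ p, (X 0) ^ k * (X 1) ^ k,
      (X 1) ^ q * (X 3) ^ q} : Set (MvPolynomial (Fin 4) K))) ^ n := by
  obtain ⟨i, j, l, rfl, h0, h1, h2, h3⟩ := h
  rw [monomial_eq4, pow_add, pow_add]
  set I := Ideal.span ({(X 0) ^ p * (X 2) ^ p, (X 0) ^ k * (X 1) ^ k,
      (X 1) ^ q * (X 3) ^ q} : Set (MvPolynomial (Fin 4) K)) with hI
  have m1 : (X 0 ^ p * X 2 ^ p : MvPolynomial (Fin 4) K) ∈ I := Ideal.subset_span (by simp)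
  have m2 : (X 0 ^ k * X 1 ^ k : MvPolynomial (Fin 4) K) ∈ I := Ideal.subset_span (by simp)
  have m3 : (X 1 ^ q * X 3 ^ q : MvPolynomial (Fin 4) K) ∈ I := Ideal.subset_span (by simp)
  have := Ideal.mul_mem_mul (Ideal.mul_mem_mul (Ideal.pow_mem_pow m1 i) (Ideal.pow_mem_pow m2 j))
    (Ideal.pow_mem_pow m3 l)
  refine Ideal.mem_of_dvd _ ?_ this
  have e : ((X 0 ^ p * X 2 ^ p) ^ i * (X 0 ^ k * X 1 ^ k) ^ j * (X 1 ^ q * X 3 ^ q) ^ l : MvPolynomial (Fin 4) K)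
    = X 0 ^ (p * i + k * j) * X 1 ^ (k * j + q * l) * X 2 ^ (p * i) * X 3 ^ (q * l) := by ring
  rw [e]
  exact mul_dvd_mul (mul_dvd_mul (mul_dvd_mul (pow_dvd_pow _ h0) (pow_dvd_pow _ h1))
    (pow_dvd_pow _ h2)) (pow_dvd_pow _ h3)

lemma PCond_of_mem {K : Type*} [Field K] (p q k n : ℕ) (f : MvPolynomial (Fin 4) K)
    (hf : f ∈ (Ideal.span ({(X 0) ^ p * (X 2) ^ p, (X 0) ^ k * (X 1) ^ k,
      (X 1) ^ q * (X 3) ^ q} : Set (MvPolynomial (Fin 4) K))) ^ n) (s : Fin 4 →₀ ℕ)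
    (hs : coeff s f ≠ 0) : PCond p q k n s := by
  classical
  have main : (Ideal.span ({(X 0) ^ p * (X 2) ^ p, (X 0) ^ k * (X 1) ^ k,
      (X 1) ^ q * (X 3) ^ q} : Set (MvPolynomial (Fin 4) K))) ^ n ≤
      Ideal.span ((fun s => monomial s (1 : K)) '' {s | PCond p q k n s}) := by
    clear hf hs f s
    induction n with
    | zero =>
      intro f _
      rw [mem_ideal_span_monomial_image]
      intro s _
      exact ⟨s, ⟨0, 0, 0, by simp⟩, le_rfl⟩
    | succ n ih =>
      rw [pow_succ]
      refine (Ideal.mul_mono_left ih).trans ?_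
      rw [Ideal.span_mul_span', Ideal.span_le]
      rintro _ ⟨_, ⟨s, ⟨i, j, l, hn, h0, h1, h2, h3⟩, rfl⟩, g, hg, rfl⟩
      simp only [Set.mem_insert_iff, Set.mem_singleton_iff] at hg
      have aux : ∀ a b c d : ℕ, (X 0 ^ a * X 1 ^ b * X 2 ^ c * X 3 ^ d : MvPolynomial (Fin 4) K)
          = monomial (Finsupp.equivFunOnFinite.symm ![a, b, c, d]) 1 := by
        intro a b c d
        rw [monomial_eq4]; simp
      rcases hg with rfl | rfl | rfl
      · apply Ideal.subset_span
        refine ⟨s + Finsupp.equivFunOnFinite.symm ![p, 0, p, 0], ⟨i + 1, j, l, ?_⟩, ?_⟩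
        · simp [mul_add]; omega
        · have := aux p 0 p 0
          simp only [pow_zero, mul_one] at this
          simp [this, monomial_mul]
      · apply Ideal.subset_span
        refine ⟨s + Finsupp.equivFunOnFinite.symm ![k, k, 0, 0], ⟨i, j + 1, l, ?_⟩, ?_⟩
        · simp [mul_add]; omega
        · have := aux k k 0 0
          simp only [pow_zero, mul_one] at this
          simp [this, monomial_mul]
      · apply Ideal.subset_span
        refine ⟨s + Finsupp.equivFunOnFinite.symm ![0, q, 0, q], ⟨i, j, l + 1, ?_⟩, ?_⟩
        · simp [mul_add]; omega
        · have := aux 0 q 0 q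
          simp only [pow_zero, mul_one, one_mul] at this
          simp [this, monomial_mul]
  have := mem_ideal_span_monomial_image.1 (main hf) s (by simpa using hs)
  obtain ⟨t, ⟨i, j, l, hn, h0, h1, h2, h3⟩, hts⟩ := this
  exact ⟨i, j, l, hn, h0.trans (hts 0), h1.trans (hts 1), h2.trans (hts 2), h3.trans (hts 3)⟩

lemma not_both {p i : ℕ} (h : p * i ≤ p - 1) (hp : 0 < p) : i = 0 := by
  by_contra hi
  have : p * 1 ≤ p * i := Nat.mul_le_mul_left p (by omega)
  omega

lemma vv0 (a b c d : ℕ) : (Finsupp.equivFunOnFinite.symm ![a, b, c, d] : Fin 4 →₀ ℕ) 0 = a := rfl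

lemma vv1 (a b c d : ℕ) : (Finsupp.equivFunOnFinite.symm ![a, b, c, d] : Fin 4 →₀ ℕ) 1 = b := rfl

lemma vv2 (a b c d : ℕ) : (Finsupp.equivFunOnFinite.symm ![a, b, c, d] : Fin 4 →₀ ℕ) 2 = c := rfl

lemma vv3 (a b c d : ℕ) : (Finsupp.equivFunOnFinite.symm ![a, b, c, d] : Fin 4 →₀ ℕ) 3 = d := rfl

theorem min_ge_two_k_of_cm {K : Type*} [Field K] (p q k : ℕ)
    (hp : 0 < p) (hq : 0 < q) (hk : 0 < k) (n : ℕ) (hn : 2 ≤ n)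
    (hCM : IsCMQuot ((Ideal.span ({(X 0) ^ p * (X 2) ^ p, (X 0) ^ k * (X 1) ^ k,
      (X 1) ^ q * (X 3) ^ q} : Set (MvPolynomial (Fin 4) K))) ^ n)) :
    2 * k ≤ min p q := by
  by_contra hcon
  have hd := two_le_dim ((Ideal.span ({(X 0) ^ p * (X 2) ^ p, (X 0) ^ k * (X 1) ^ k,
      (X 1) ^ q * (X 3) ^ q} : Set (MvPolynomial (Fin 4) K))) ^ n) (by
    refine (Ideal.pow_le_self (by omega)).trans ?_
    rw [Ideal.span_le]
    intro f hf
    simp only [Set.mem_insert_iff, Set.mem_singleton_iff] at hf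
    rcases hf with rfl | rfl | rfl <;> simp [hp.ne', hq.ne', hk.ne'])
  have C := crit _ hd hCM (PCond p q k n) (mem_of_PCond p q k n) (PCond_of_mem p q k n)
  obtain ⟨n, rfl⟩ := Nat.exists_eq_add_of_le' hn
  have hcases : (p < 2 * k ∧ k < q) ∨ (q < 2 * k ∧ k < p) ∨ (p ≤ k ∧ q ≤ k) := by
    rcases not_and_or.1 (mt le_min_iff.2 hcon) with h | h <;> omega
  rcases hcases with ⟨h1, h2⟩ | ⟨h1, h2⟩ | ⟨h1, h2⟩
  · refine C (fun i => i = 3) (Finsupp.equivFunOnFinite.symm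
      ![k * (n + 2) - 1, q + k * (n + 1) - 1, p - 1, q - 1]) ?_ 3 1 rfl (by decide) ?_ ?_
    · rintro i j rfl hj
      obtain rfl | rfl | rfl | rfl : j = 0 ∨ j = 1 ∨ j = 2 ∨ j = 3 := by clear hj; revert j; decide
      · refine ⟨0, n + 2, 0, ?_⟩
        simp only [Finsupp.add_apply, vv0, vv1, vv2, vv3, Finsupp.single_apply]; simp [mul_add]; omega
      · refine ⟨0, n + 1, 1, ?_⟩
        simp only [Finsupp.add_apply, vv0, vv1, vv2, vv3, Finsupp.single_apply]; simp [mul_add]; omega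
      · refine ⟨1, n, 1, ?_⟩
        simp only [Finsupp.add_apply, vv0, vv1, vv2, vv3, Finsupp.single_apply]; simp [mul_add]; omega
      · simp at hj
    · rintro ⟨i, j, l, h, a0, a1, a2, a3⟩
      simp at a0 a1 a2 a3
      obtain rfl := not_both a2 hp
      rcases Nat.eq_zero_or_pos l with rfl | hl
      · obtain rfl : j = n + 2 := by omega
        have := Nat.mul_pos hk (by omega : 0 < n + 2)
        omega
      · obtain ⟨l, rfl⟩ := Nat.exists_eq_add_of_le' hl
        have e : n + 1 = j + l := by omega
        rw [e] at a1
        have := Nat.mul_le_mul_right l h2.le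
        simp only [mul_add] at a1
        omega
    · rintro ⟨i, j, l, h, a0, a1, a2, a3⟩
      simp at a0 a1 a2 a3
      obtain rfl := not_both a2 hp
      obtain rfl := not_both a3 hq
      obtain rfl : j = n + 2 := by omega
      have := Nat.mul_pos hk (by omega : 0 < n + 2)
      omega
  · refine C (fun i => i = 2) (Finsupp.equivFunOnFinite.symm
      ![p + k * (n + 1) - 1, k * (n + 2) - 1, p - 1, q - 1]) ?_ 2 0 rfl (by decide) ?_ ?_
    · rintro i j rfl hj
      obtain rfl | rfl | rfl | rfl : j = 0 ∨ j = 1 ∨ j = 2 ∨ j = 3 := by clear hj; revert j; decide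
      · refine ⟨1, n + 1, 0, ?_⟩
        simp only [Finsupp.add_apply, vv0, vv1, vv2, vv3, Finsupp.single_apply]; simp [mul_add]; omega
      · refine ⟨0, n + 2, 0, ?_⟩
        simp only [Finsupp.add_apply, vv0, vv1, vv2, vv3, Finsupp.single_apply]; simp [mul_add]; omega
      · simp at hj
      · refine ⟨1, n, 1, ?_⟩
        simp only [Finsupp.add_apply, vv0, vv1, vv2, vv3, Finsupp.single_apply]; simp [mul_add]; omega
    · rintro ⟨i, j, l, h, a0, a1, a2, a3⟩
      simp at a0 a1 a2 a3
      obtain rfl := not_both a3 hq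
      rcases Nat.eq_zero_or_pos i with rfl | hl
      · obtain rfl : j = n + 2 := by omega
        have := Nat.mul_pos hk (by omega : 0 < n + 2)
        omega
      · obtain ⟨i, rfl⟩ := Nat.exists_eq_add_of_le' hl
        have e : n + 1 = j + i := by omega
        rw [e] at a0
        have := Nat.mul_le_mul_right i h2.le
        simp only [mul_add] at a0
        omega
    · rintro ⟨i, j, l, h, a0, a1, a2, a3⟩
      simp at a0 a1 a2 a3
      obtain rfl := not_both a2 hp
      obtain rfl := not_both a3 hq
      obtain rfl : j = n + 2 := by omega
      have := Nat.mul_pos hk (by omega : 0 < n + 2)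
      omega
  · refine C (fun i => i = 1 ∨ i = 2) (Finsupp.equivFunOnFinite.symm
      ![k * (n + 2) - 1, k * (n + 2) - 1, p - 1, q - 1]) ?_ 1 0 (by decide) (by decide) ?_ ?_
    · rintro i j (rfl | rfl) hj
      · obtain rfl | rfl | rfl | rfl : j = 0 ∨ j = 1 ∨ j = 2 ∨ j = 3 := by clear hj; revert j; decide
        · refine ⟨0, n + 2, 0, ?_⟩
          simp only [Finsupp.add_apply, vv0, vv1, vv2, vv3, Finsupp.single_apply]; simp [mul_add]; omega
        · simp at hj
        · simp at hj
        · refine ⟨0, n + 1, 1, ?_⟩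
          simp only [Finsupp.add_apply, vv0, vv1, vv2, vv3, Finsupp.single_apply]; simp [mul_add]; omega
      · obtain rfl | rfl | rfl | rfl : j = 0 ∨ j = 1 ∨ j = 2 ∨ j = 3 := by clear hj; revert j; decide
        · refine ⟨1, n + 1, 0, ?_⟩
          simp only [Finsupp.add_apply, vv0, vv1, vv2, vv3, Finsupp.single_apply]; simp [mul_add]; omega
        · simp at hj
        · simp at hj
        · refine ⟨1, n, 1, ?_⟩
          simp only [Finsupp.add_apply, vv0, vv1, vv2, vv3, Finsupp.single_apply]; simp [mul_add]; omega
    all_goals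
      rintro ⟨i, j, l, h, a0, a1, a2, a3⟩
      simp at a0 a1 a2 a3
      obtain rfl := not_both a2 hp
      obtain rfl := not_both a3 hq
      obtain rfl : j = n + 2 := by omega
      have := Nat.mul_pos hk (by omega : 0 < n + 2)
      omega
end

section
/- Let R = K[a,b,c,x,y,z] and I = ((ab)^m, (bc)^m, (ax)^p, (by)^q, (cz)^r) with positive integers m, p, q, r (the two internal edges have equal weight m). Then for n ≥ max{p,r}/m + 2, the ideal I^n is not Cohen-Macaulay; i.e., R/I^n fails to be Cohen-Macaulay. -/
open MvPolynomial

section abstractpart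
open RingTheory.Sequence

lemma aux_replace {S N : Type*} [CommRing S] [AddCommGroup N] [Module S N] {s r t v : S}
    (h : IsWeaklyRegular N [s, r, t]) : IsWeaklyRegular N [s, r, t - v * r] := by
  have e1 : [s, r, t] = [s, r] ++ [t] := rfl
  have e2 : [s, r, t - v * r] = [s, r] ++ [t - v * r] := rfl
  rw [e1, isWeaklyRegular_append_iff, isWeaklyRegular_singleton_iff] at h
  rw [e2, isWeaklyRegular_append_iff, isWeaklyRegular_singleton_iff]
  refine ⟨h.1, ?_⟩
  have key : ∀ x : N ⧸ (Ideal.ofList [s, r] • ⊤ : Submodule S N), (t - v * r) • x = t • x := by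
    intro x
    obtain ⟨x, rfl⟩ := Submodule.Quotient.mk_surjective _ x
    rw [← Submodule.Quotient.mk_smul, ← Submodule.Quotient.mk_smul, Submodule.Quotient.eq]
    have : (t - v * r) • x - t • x = (-(v * r)) • x := by rw [← sub_smul]; congr 1; ring
    rw [this]
    refine Submodule.smul_mem_smul ?_ trivial
    refine neg_mem (Ideal.mul_mem_left _ _ (Ideal.subset_span ?_))
    simp
  intro x y hxy
  simp only [key] at hxy
  exact h.2 hxy

open IsLocalRing in
lemma aux_two {S N : Type*} [CommRing S] [IsLocalRing S] [AddCommGroup N] [Module S N]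
    [IsNoetherian S N] (Q : Ideal S)
    (hQ : ∀ g h : S, ∃ v, h - v * g ∈ Q ∨ g - v * h ∈ Q) (r₁ r₂ r₃ : S)
    (h1 : r₁ ∈ maximalIdeal S) (h2 : r₂ ∈ maximalIdeal S) (h3 : r₃ ∈ maximalIdeal S)
    (h : IsWeaklyRegular N [r₁, r₂, r₃]) :
    ∃ g₁ g₂ : S, g₁ ∈ Q ∧ g₂ ∈ Q ∧ g₁ ∈ maximalIdeal S ∧ g₂ ∈ maximalIdeal S ∧
      IsWeaklyRegular N [g₁, g₂] := by
  have step : ∀ s r t : S, s ∈ maximalIdeal S → r ∈ maximalIdeal S → t ∈ maximalIdeal S →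
      IsWeaklyRegular N [s, r, t] → ∃ r' t' : S, r' ∈ maximalIdeal S ∧ t' ∈ maximalIdeal S ∧
        t' ∈ Q ∧ IsWeaklyRegular N [s, r', t'] := by
    intro s r t hs hr ht h
    obtain ⟨v, hv | hv⟩ := hQ r t
    · exact ⟨r, t - v * r, hr, sub_mem ht (Ideal.mul_mem_left _ _ hr), hv, aux_replace h⟩
    · refine ⟨t, r - v * t, ht, sub_mem hr (Ideal.mul_mem_left _ _ ht), hv, aux_replace ?_⟩
      refine isWeaklyRegular_of_perm_of_subset_maximalIdeal h ?_ ?_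
      · exact List.Perm.cons _ (List.Perm.swap _ _ _)
      · simp [-mem_maximalIdeal, hs, hr, ht]
  obtain ⟨r', t', hr', ht', hQ', hreg⟩ := step r₁ r₂ r₃ h1 h2 h3 h
  have hreg2 : IsWeaklyRegular N [t', r₁, r'] := by
    refine isWeaklyRegular_of_perm_of_subset_maximalIdeal hreg ?_ ?_
    · exact (List.Perm.cons _ (List.Perm.swap _ _ _)).trans (List.Perm.swap _ _ _)
    · simp [-mem_maximalIdeal, h1, hr', ht']
  obtain ⟨r'', t'', hr'', ht'', hQ'', hreg3⟩ := step t' r₁ r' ht' h1 hr' hreg2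
  refine ⟨t', t'', hQ', hQ'', ht', ht'', ?_⟩
  have hreg4 : IsWeaklyRegular N ([t', t''] ++ [r'']) := by
    refine isWeaklyRegular_of_perm_of_subset_maximalIdeal hreg3 ?_ ?_
    · exact List.Perm.cons _ (List.Perm.swap _ _ _)
    · simp [-mem_maximalIdeal, ht', hr'', ht'']
  exact ((isWeaklyRegular_append_iff _ _ _).1 hreg4).1

open IsLocalRing in
lemma aux_pow {S N : Type*} [CommRing S] [IsLocalRing S] [AddCommGroup N] [Module S N]
    [IsNoetherian S N] (D : Ideal S) (g₁ g₂ : S) (hg₁ : g₁ ∈ D.radical) (hg₂ : g₂ ∈ D.radical)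
    (h1 : g₁ ∈ maximalIdeal S) (h2 : g₂ ∈ maximalIdeal S) (h : IsWeaklyRegular N [g₁, g₂]) :
    ∃ G₁ G₂ : S, G₁ ∈ D ∧ G₂ ∈ D ∧ IsWeaklyRegular N [G₁, G₂] := by
  have step : ∀ a b : S, ∀ k : ℕ, a ∈ maximalIdeal S → b ∈ maximalIdeal S →
      IsWeaklyRegular N [a, b] → IsWeaklyRegular N [a, b ^ k] := by
    intro a b k ha hb h
    rw [isWeaklyRegular_cons_iff, isWeaklyRegular_singleton_iff] at h ⊢
    exact ⟨h.1, h.2.pow k⟩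
  obtain ⟨k, hk⟩ := hg₁
  obtain ⟨l, hl⟩ := hg₂
  have hk' : g₁ ^ (k + 1) ∈ D := by rw [pow_succ]; exact Ideal.mul_mem_right _ _ hk
  have hl' : g₂ ^ (l + 1) ∈ D := by rw [pow_succ]; exact Ideal.mul_mem_right _ _ hl
  have m2 : g₂ ^ (l + 1) ∈ maximalIdeal S := Ideal.pow_mem_of_mem _ h2 _ (by simp)
  refine ⟨g₂ ^ (l + 1), g₁ ^ (k + 1), hl', hk', step _ _ _ m2 h1 ?_⟩
  refine isWeaklyRegular_of_perm_of_subset_maximalIdeal (step _ _ (l + 1) h1 h2 h)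
    (List.Perm.swap _ _ _) ?_
  simp only [List.mem_cons, List.not_mem_nil, or_false]
  rintro r (rfl | rfl) <;> assumption

lemma aux_ext {S N : Type*} [CommRing S] [AddCommGroup N] [Module S N] (A B : Ideal S) (F : N)
    (hAB : ∀ a ∈ A, ∀ b ∈ B, (a * b) • F = 0) (G₁ G₂ : S) (h1 : G₁ ∈ A ⊔ B) (h2 : G₂ ∈ A ⊔ B)
    (h : IsWeaklyRegular N [G₁, G₂]) :
    ∃ U : N, (∀ a ∈ A, a • U = 0) ∧ ∀ b ∈ B, b • (F - U) = 0 := by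
  rw [isWeaklyRegular_cons_iff, isWeaklyRegular_singleton_iff] at h
  obtain ⟨hr1, hr2⟩ := h
  obtain ⟨a₁, ha₁, b₁, hb₁, rfl⟩ := Submodule.mem_sup.1 h1
  obtain ⟨a₂, ha₂, b₂, hb₂, rfl⟩ := Submodule.mem_sup.1 h2
  have e : (a₂ + b₂) • (b₁ • F) = (a₁ + b₁) • (b₂ • F) := by
    have h3 := hAB _ ha₂ _ hb₁
    have h4 := hAB _ ha₁ _ hb₂
    have : (a₂ + b₂) • (b₁ • F) = (a₂ * b₁) • F + (b₁ * b₂) • F := by module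
    rw [this, h3]
    have : (a₁ + b₁) • (b₂ • F) = (a₁ * b₂) • F + (b₁ * b₂) • F := by module
    rw [this, h4]
  have hU : ∃ U : N, b₁ • F = (a₁ + b₁) • U := by
    have h5 : (Submodule.Quotient.mk (b₁ • F) : QuotSMulTop (a₁ + b₁) N) = 0 := by
      apply hr2
      simp only [smul_zero]
      rw [← Submodule.Quotient.mk_smul, e, Submodule.Quotient.mk_eq_zero]
      exact Submodule.smul_mem_pointwise_smul _ _ _ trivial
    rw [Submodule.Quotient.mk_eq_zero] at h5
    obtain ⟨U, -, hU⟩ := (Submodule.mem_smul_pointwise_iff_exists _ _ _).1 h5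
    exact ⟨U, hU.symm⟩
  obtain ⟨U, hU⟩ := hU
  refine ⟨U, fun a ha => ?_, fun b hb => ?_⟩
  · apply hr1
    simp only [smul_zero]
    rw [smul_comm, ← hU, ← mul_smul, hAB _ ha _ hb₁]
  · apply hr1
    simp only [smul_zero]
    have h6 := hAB _ ha₁ _ hb
    have : (a₁ + b₁) • b • (F - U) = (a₁ * b) • F + b • (b₁ • F) - b • ((a₁ + b₁) • U) := by module
    rw [this, h6, hU]; simp

end abstractpart

lemma aux_poly {K : Type*} [Field K] (g h : Polynomial K) :
    ∃ u v : Polynomial K, u.coeff 0 ≠ 0 ∧ (u * h = v * g ∨ u * g = v * h) := by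
  by_cases hg : g = 0
  · exact ⟨1, 0, by simp, Or.inr (by simp [hg])⟩
  by_cases hh : h = 0
  · exact ⟨1, 0, by simp, Or.inl (by simp [hh])⟩
  obtain ⟨g', hg1, hg2⟩ := Polynomial.exists_eq_pow_rootMultiplicity_mul_and_not_dvd g hg 0
  obtain ⟨h', hh1, hh2⟩ := Polynomial.exists_eq_pow_rootMultiplicity_mul_and_not_dvd h hh 0
  simp only [map_zero, sub_zero, Polynomial.X_dvd_iff] at hg1 hg2 hh1 hh2
  generalize Polynomial.rootMultiplicity 0 g = i at *
  generalize Polynomial.rootMultiplicity 0 h = j at *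
  rcases le_total i j with hij | hij
  · refine ⟨g', Polynomial.X ^ (j - i) * h', hg2, Or.inl ?_⟩
    obtain ⟨k, rfl⟩ := Nat.exists_eq_add_of_le hij
    rw [hh1, hg1, Nat.add_sub_cancel_left, pow_add]; ring
  · refine ⟨h', Polynomial.X ^ (i - j) * g', hh2, Or.inr ?_⟩
    obtain ⟨k, rfl⟩ := Nat.exists_eq_add_of_le hij
    rw [hh1, hg1, Nat.add_sub_cancel_left, pow_add]; ring

lemma aux_comp {K σ : Type*} [Field K] [DecidableEq σ] (e : σ) (P : Ideal (MvPolynomial σ K))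
    (hP : ∀ i ≠ e, X i ∈ P) (g h : MvPolynomial σ K) :
    ∃ u v : MvPolynomial σ K, constantCoeff u ≠ 0 ∧ (u * h - v * g ∈ P ∨ u * g - v * h ∈ P) := by
  let π : MvPolynomial σ K →ₐ[K] Polynomial K := aeval fun i => if i = e then Polynomial.X else 0
  let ι : Polynomial K →ₐ[K] MvPolynomial σ K := Polynomial.aeval (X e)
  have key : ∀ s, Ideal.Quotient.mkₐ K P s = Ideal.Quotient.mkₐ K P (ι (π s)) := by
    intro s
    have : Ideal.Quotient.mkₐ K P = ((Ideal.Quotient.mkₐ K P).comp ι).comp π := by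
      apply MvPolynomial.algHom_ext
      intro i
      by_cases hi : i = e
      · subst hi; simp [π, ι]
      · simp only [AlgHom.comp_apply, π, aeval_X, hi, if_false, map_zero]
        exact Ideal.Quotient.eq_zero_iff_mem.2 (hP i hi)
    exact DFunLike.congr_fun this s
  obtain ⟨u, v, hu, huv⟩ := aux_poly (π g) (π h)
  refine ⟨ι u, ι v, ?_, ?_⟩
  · have : constantCoeff (ι u) = u.coeff 0 := by
      simp only [ι, Polynomial.aeval_eq_sum_range, map_sum, smul_eq_C_mul, map_mul, map_pow,
        constantCoeff_X, constantCoeff_C]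
      rw [Finset.sum_eq_single 0] <;> simp +contextual
    rwa [this]
  · rcases huv with huv | huv
    · left
      apply Ideal.Quotient.eq.1
      have := congrArg (fun s => Ideal.Quotient.mkₐ K P (ι s)) huv
      simp only [map_mul, ← key] at this
      simpa using this
    · right
      apply Ideal.Quotient.eq.1
      have := congrArg (fun s => Ideal.Quotient.mkₐ K P (ι s)) huv
      simp only [map_mul, ← key] at this
      simpa using this

lemma aux_sub {R N : Type*} [CommRing R] [AddCommGroup N] [Module R N] (b s : R) (F U : N)
    (hb : b • (F - U) = 0) : b • (s • F - s • U) = 0 := by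
  rw [← smul_sub, smul_comm, hb, smul_zero]

lemma aux_key {K σ : Type*} [Field K] [Finite σ] [DecidableEq σ] (J : Ideal (MvPolynomial σ K))
    (E : (σ →₀ ℕ) → Prop) (hJ : ∀ h, h ∈ J ↔ ∀ d ∈ h.support, E d)
    (e : σ) (A B : Ideal (MvPolynomial σ K)) (f α β : σ →₀ ℕ)
    (hα : monomial α 1 ∈ A) (hβ : monomial β 1 ∈ B)
    (hαf : ¬ E (α + f)) (hβf : ¬ E (β + f))
    (hAB : ∀ s ∈ A * B, s * monomial f 1 ∈ J)
    (hrad : ∀ i ≠ e, X i ∈ (A ⊔ B).radical) (r₁ r₂ r₃ : MvPolynomial σ K)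
    (h1 : constantCoeff r₁ = 0) (h2 : constantCoeff r₂ = 0) (h3 : constantCoeff r₃ = 0) :
    ¬ RingTheory.Sequence.IsWeaklyRegular (MvPolynomial σ K ⧸ J) [r₁, r₂, r₃] := by
  intro hreg
  let R := MvPolynomial σ K
  let 𝔪 : Ideal R := RingHom.ker (constantCoeff : R →+* K)
  have : 𝔪.IsPrime := RingHom.ker_isPrime _
  let S := Localization.AtPrime 𝔪
  let N := LocalizedModule 𝔪.primeCompl (R ⧸ J)
  let φ : (R ⧸ J) →ₗ[R] N := LocalizedModule.mkLinearMap 𝔪.primeCompl (R ⧸ J)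
  have hmem : ∀ r : R, constantCoeff r = 0 → algebraMap R S r ∈ IsLocalRing.maximalIdeal S :=
    fun r hr => (IsLocalization.AtPrime.to_map_mem_maximal_iff S 𝔪 r).2 hr
  have : Module.Finite S N := Module.Finite.of_isLocalizedModule 𝔪.primeCompl φ
  have : IsNoetherianRing S := IsLocalization.isNoetherianRing 𝔪.primeCompl S inferInstance
  have : IsNoetherian S N := inferInstance
  have hregN : RingTheory.Sequence.IsWeaklyRegular N
      [algebraMap R S r₁, algebraMap R S r₂, algebraMap R S r₃] :=
    RingTheory.Sequence.IsWeaklyRegular.of_isLocalizedModule S 𝔪.primeCompl φ hreg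
  let P := (A ⊔ B).radical
  have hQ : ∀ g h : S, ∃ v, h - v * g ∈ P.map (algebraMap R S) ∨
      g - v * h ∈ P.map (algebraMap R S) := by
    intro g h
    obtain ⟨g, s, rfl⟩ := IsLocalization.exists_mk'_eq 𝔪.primeCompl g
    obtain ⟨h, t, rfl⟩ := IsLocalization.exists_mk'_eq 𝔪.primeCompl h
    obtain ⟨u, v, hu, huv⟩ := aux_comp e P hrad g h
    have hu' : u ∈ 𝔪.primeCompl := hu
    have gen : ∀ (g h : R) (s t : 𝔪.primeCompl), u * h - v * g ∈ P →
        IsLocalization.mk' S h t - IsLocalization.mk' S (v * s) (⟨u, hu'⟩ * t) *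
          IsLocalization.mk' S g s ∈ P.map (algebraMap R S) := by
      intro g h s t hP
      have : IsLocalization.mk' S h t - IsLocalization.mk' S (v * s) (⟨u, hu'⟩ * t) *
          IsLocalization.mk' S g s =
          IsLocalization.mk' S 1 (⟨u, hu'⟩ * t) * algebraMap R S (u * h - v * g) := by
        have hs := IsLocalization.mk'_spec S g s
        rw [mul_comm (IsLocalization.mk' S 1 _), ← IsLocalization.mk'_eq_mul_mk'_one,
          sub_eq_iff_eq_add, ← IsLocalization.mk'_mul, ← IsLocalization.mk'_add,
          IsLocalization.mk'_eq_iff_eq]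
        congr 1
        simp only [Submonoid.coe_mul]
        ring
      rw [this]
      exact Ideal.mul_mem_left _ _ (Ideal.mem_map_of_mem _ hP)
    rcases huv with huv | huv
    · exact ⟨_, Or.inl (gen g h s t huv)⟩
    · exact ⟨_, Or.inr (gen h g t s huv)⟩
  obtain ⟨g₁, g₂, hg₁, hg₂, hm₁, hm₂, hg⟩ :=
    aux_two (P.map (algebraMap R S)) hQ _ _ _ (hmem _ h1) (hmem _ h2) (hmem _ h3) hregN
  have hle : P.map (algebraMap R S) ≤ ((A ⊔ B).map (algebraMap R S)).radical :=
    Ideal.map_radical_le _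
  obtain ⟨G₁, G₂, hG₁, hG₂, hG⟩ := aux_pow _ g₁ g₂ (hle hg₁) (hle hg₂) hm₁ hm₂ hg
  rw [Ideal.map_sup] at hG₁ hG₂
  let f' : R := monomial f 1
  let F : N := φ (Ideal.Quotient.mk J f')
  have hφ : ∀ (s h : R), s • φ (Ideal.Quotient.mk J h) = φ (Ideal.Quotient.mk J (s * h)) := by
    intro s h
    rw [← map_smul]; rfl
  have hkill : ∀ s ∈ (A * B).map (algebraMap R S), s • F = 0 := by
    intro s hs
    have : (A * B).map (algebraMap R S) ≤ LinearMap.ker (LinearMap.toSpanSingleton S N F) := by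
      rw [Ideal.map_le_iff_le_comap]
      intro s hs
      rw [Ideal.mem_comap, LinearMap.mem_ker, LinearMap.toSpanSingleton_apply, algebraMap_smul, hφ,
        Ideal.Quotient.eq_zero_iff_mem.2 (hAB s hs), map_zero]
    exact this hs
  obtain ⟨U, hU1, hU2⟩ := aux_ext (A.map (algebraMap R S)) (B.map (algebraMap R S)) F
    (fun a ha b hb => hkill _ (by rw [Ideal.map_mul]; exact Ideal.mul_mem_mul ha hb))
    G₁ G₂ hG₁ hG₂ hG
  have hU1' := hU1 _ (Ideal.mem_map_of_mem _ hα)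
  have hU2' := hU2 _ (Ideal.mem_map_of_mem _ hβ)
  rw [algebraMap_smul] at hU1' hU2'
  obtain ⟨⟨w, ⟨s, hs⟩⟩, hw⟩ := IsLocalizedModule.surj 𝔪.primeCompl φ U
  obtain ⟨h, rfl⟩ := Ideal.Quotient.mk_surjective w
  replace hw : s • U = φ (Ideal.Quotient.mk J h) := hw
  have tozero : ∀ k : R, φ (Ideal.Quotient.mk J k) = 0 → ∃ c ∈ 𝔪.primeCompl, c * k ∈ J := by
    intro k hk
    obtain ⟨c, hc⟩ := (IsLocalizedModule.eq_zero_iff 𝔪.primeCompl φ).1 hk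
    refine ⟨c, c.2, ?_⟩
    rw [← Ideal.Quotient.eq_zero_iff_mem]
    exact hc
  obtain ⟨c₁, hc₁, hJ1⟩ := tozero (monomial α 1 * h) (by
    rw [← hφ, ← hw, smul_comm, hU1', smul_zero])
  obtain ⟨c₂, hc₂, hJ2⟩ := tozero (monomial β 1 * (s * f' - h)) (by
    have hb : ∀ b : R, b • (F - U) = 0 → b • (s • F - s • U) = 0 := fun b hb =>
      aux_sub b s F U hb
    rw [← hφ, map_sub, map_sub, ← hφ, ← hw]
    exact hb _ hU2')
  have coeffz : ∀ (γ : σ →₀ ℕ) (k : R), ¬ E (γ + f) → monomial γ 1 * k ∈ J → coeff f k = 0 := by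
    intro γ k hγ hk
    by_contra hne
    apply hγ
    refine (hJ _).1 hk _ ?_
    rw [mem_support_iff, coeff_monomial_mul, one_mul]
    exact hne
  have z1 := coeffz α (c₁ * c₂ * h) hαf (by
    have := J.mul_mem_left c₂ hJ1
    convert this using 1; ring)
  have z2 := coeffz β (c₁ * c₂ * (s * f' - h)) hβf (by
    have := J.mul_mem_left c₁ hJ2
    convert this using 1; ring)
  have z3 : coeff f (c₁ * c₂ * s * f') = 0 := by
    have : c₁ * c₂ * s * f' = c₁ * c₂ * h + c₁ * c₂ * (s * f' - h) := by ring
    rw [this, coeff_add, z1, z2, add_zero]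
  have z4 : coeff f (c₁ * c₂ * s * f') = constantCoeff (c₁ * c₂ * s) := by
    have := coeff_mul_monomial 0 f (1 : K) (c₁ * c₂ * s)
    rw [zero_add, mul_one] at this
    exact this
  rw [z4, map_mul, map_mul] at z3
  exact mul_ne_zero (mul_ne_zero hc₁ hc₂) hs z3

def EdgeExp (m p q r n : ℕ) (d : Fin 6 →₀ ℕ) : Prop :=
  ∃ u w v t s : ℕ, u + w + v + t + s = n ∧ m * u + p * v ≤ d 0 ∧ m * u + m * w + q * t ≤ d 1 ∧
    m * w + r * s ≤ d 2 ∧ p * v ≤ d 3 ∧ q * t ≤ d 4 ∧ r * s ≤ d 5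

lemma aux_gen {K : Type*} [Field K] (i j : Fin 6) (k : ℕ) :
    (X i ^ k * X j ^ k : MvPolynomial (Fin 6) K) =
      monomial (Finsupp.single i k + Finsupp.single j k) 1 := by
  rw [X_pow_eq_monomial, X_pow_eq_monomial, monomial_mul, one_mul]

lemma aux_mem {K : Type*} [Field K] (m p q r n : ℕ) (h : MvPolynomial (Fin 6) K) :
    h ∈ ((Ideal.span ({(X 0) ^ m * (X 1) ^ m, (X 1) ^ m * (X 2) ^ m,
          (X 0) ^ p * (X 3) ^ p, (X 1) ^ q * (X 4) ^ q, (X 2) ^ r * (X 5) ^ r} :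
          Set (MvPolynomial (Fin 6) K))) ^ n) ↔ ∀ d ∈ h.support, EdgeExp m p q r n d := by
  set I := Ideal.span ({(X 0) ^ m * (X 1) ^ m, (X 1) ^ m * (X 2) ^ m,
          (X 0) ^ p * (X 3) ^ p, (X 1) ^ q * (X 4) ^ q, (X 2) ^ r * (X 5) ^ r} :
          Set (MvPolynomial (Fin 6) K)) with hI
  have hT : ∀ n (h : MvPolynomial (Fin 6) K),
      h ∈ Ideal.span ((fun d => monomial d (1 : K)) '' {d | EdgeExp m p q r n d}) ↔
      ∀ d ∈ h.support, EdgeExp m p q r n d := by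
    intro n h
    rw [mem_ideal_span_monomial_image]
    refine forall₂_congr fun d _ => ⟨?_, fun hd => ⟨d, hd, le_rfl⟩⟩
    rintro ⟨e, ⟨u, w, v, t, s, h0, h1, h2, h3, h4, h5, h6⟩, hle⟩
    exact ⟨u, w, v, t, s, h0, h1.trans (hle _), h2.trans (hle _), h3.trans (hle _),
      h4.trans (hle _), h5.trans (hle _), h6.trans (hle _)⟩
  rw [← hT]
  have : I ^ n = Ideal.span ((fun d => monomial d (1 : K)) '' {d | EdgeExp m p q r n d}) := by
    apply le_antisymm
    · induction n with
      | zero =>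
        intro x _
        rw [hT]
        intro d _
        exact ⟨0, 0, 0, 0, 0, by simp⟩
      | succ n ih =>
        rw [pow_succ]
        refine (Ideal.mul_mono_left ih).trans ?_
        rw [hI, Ideal.span_mul_span', Ideal.span_le]
        rintro _ ⟨_, ⟨d, ⟨u, w, v, t, s, h0, h1, h2, h3, h4, h5, h6⟩, rfl⟩, g, hg, rfl⟩
        simp only [Set.mem_insert_iff, Set.mem_singleton_iff, aux_gen] at hg
        rcases hg with rfl | rfl | rfl | rfl | rfl
        all_goals
          simp only [monomial_mul, one_mul]
          apply Ideal.subset_span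
          refine ⟨_, ?_, rfl⟩
        · refine ⟨u + 1, w, v, t, s, by omega, ?_⟩
          simp [mul_add]; omega
        · refine ⟨u, w + 1, v, t, s, by omega, ?_⟩
          simp [mul_add]; omega
        · refine ⟨u, w, v + 1, t, s, by omega, ?_⟩
          simp [mul_add]; omega
        · refine ⟨u, w, v, t + 1, s, by omega, ?_⟩
          simp [mul_add]; omega
        · refine ⟨u, w, v, t, s + 1, by omega, ?_⟩
          simp [mul_add]; omega
    · rw [Ideal.span_le]
      rintro _ ⟨d, ⟨u, w, v, t, s, rfl, h1, h2, h3, h4, h5, h6⟩, rfl⟩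
      have hmem : (X 0 ^ m * X 1 ^ m) ^ u * (X 1 ^ m * X 2 ^ m) ^ w * (X 0 ^ p * X 3 ^ p) ^ v *
          (X 1 ^ q * X 4 ^ q) ^ t * (X 2 ^ r * X 5 ^ r) ^ s ∈ I ^ (u + w + v + t + s) := by
        simp only [pow_add I]
        refine Ideal.mul_mem_mul (Ideal.mul_mem_mul (Ideal.mul_mem_mul (Ideal.mul_mem_mul
          ?_ ?_) ?_) ?_) ?_ <;> apply Ideal.pow_mem_pow <;> apply Ideal.subset_span <;> simp
      refine Ideal.mem_of_dvd _ ?_ hmem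
      simp only [aux_gen, monomial_pow, monomial_mul, one_pow, one_mul]
      rw [monomial_dvd_monomial]
      refine ⟨Or.inr ?_, one_dvd _⟩
      intro i
      fin_cases i <;> simp [mul_comm u, mul_comm v, mul_comm w, mul_comm t, mul_comm s] <;> omega
  rw [this]

lemma aux_key2 {K : Type*} [Field K] (J : Ideal (MvPolynomial (Fin 6) K))
    (E : (Fin 6 →₀ ℕ) → Prop) (hJ : ∀ h, h ∈ J ↔ ∀ d ∈ h.support, E d)
    (e : Fin 6) (sA sB : Set (Fin 6)) (N : ℕ) (f : Fin 6 →₀ ℕ) (i₀ j₀ : Fin 6)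
    (hi : i₀ ∈ sA) (hj : j₀ ∈ sB)
    (hαf : ¬ E (Finsupp.single i₀ N + f)) (hβf : ¬ E (Finsupp.single j₀ N + f))
    (hAB : ∀ i ∈ sA, ∀ j ∈ sB, E (Finsupp.single i N + Finsupp.single j N + f))
    (hcov : ∀ i ≠ e, i ∈ sA ∨ i ∈ sB) (r₁ r₂ r₃ : MvPolynomial (Fin 6) K)
    (h1 : constantCoeff r₁ = 0) (h2 : constantCoeff r₂ = 0) (h3 : constantCoeff r₃ = 0) :
    ¬ RingTheory.Sequence.IsWeaklyRegular (MvPolynomial (Fin 6) K ⧸ J) [r₁, r₂, r₃] := by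
  let G : Fin 6 → MvPolynomial (Fin 6) K := fun i => monomial (Finsupp.single i N) 1
  refine aux_key J E hJ e (Ideal.span (G '' sA)) (Ideal.span (G '' sB)) f
    (Finsupp.single i₀ N) (Finsupp.single j₀ N) (Ideal.subset_span ⟨_, hi, rfl⟩)
    (Ideal.subset_span ⟨_, hj, rfl⟩) hαf hβf ?_ ?_ r₁ r₂ r₃ h1 h2 h3
  · have : Ideal.span (G '' sA) * Ideal.span (G '' sB) ≤
        Submodule.comap (LinearMap.mulRight (MvPolynomial (Fin 6) K) (monomial f 1)) J := by
      rw [Ideal.span_mul_span', Ideal.span_le]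
      rintro _ ⟨_, ⟨i, hi, rfl⟩, _, ⟨j, hj, rfl⟩, rfl⟩
      simp only [G, monomial_mul, one_mul, SetLike.mem_coe, Submodule.mem_comap,
        LinearMap.mulRight_apply]
      rw [hJ]
      intro d hd
      have := support_monomial_subset hd
      rw [Finset.mem_singleton] at this
      rw [this]
      exact hAB i hi j hj
    exact fun s hs => this hs
  · intro i hie
    refine ⟨N, ?_⟩
    rw [X_pow_eq_monomial]
    rcases hcov i hie with h | h
    · exact Ideal.mem_sup_left (Ideal.subset_span ⟨i, h, rfl⟩)
    · exact Ideal.mem_sup_right (Ideal.subset_span ⟨i, h, rfl⟩)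

lemma aux_dim {K : Type*} [Field K] (J : Ideal (MvPolynomial (Fin 6) K)) (e : Fin 3 → Fin 6)
    (g : Fin 6 → MvPolynomial (Fin 3) K) (hg : ∀ i, g (e i) = X i)
    (hJ : ∀ s ∈ J, aeval (R := K) g s = 0) :
    (3 : WithBot ℕ∞) ≤ ringKrullDim (MvPolynomial (Fin 6) K ⧸ J) := by
  have h3 : ringKrullDim (MvPolynomial (Fin 3) K) = 3 := by
    rw [MvPolynomial.ringKrullDim_of_isNoetherianRing, ringKrullDim_eq_zero_of_field]
    simp
  rw [← h3]
  refine ringKrullDim_le_of_surjective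
    (Ideal.Quotient.lift J (aeval (R := K) g : _ →ₐ[K] _).toRingHom hJ) ?_
  apply Ideal.Quotient.lift_surjective_of_surjective
  intro x
  refine ⟨rename e x, ?_⟩
  change aeval g (rename e x) = x
  rw [aeval_rename]
  have : g ∘ e = X := funext hg
  rw [this, aeval_X_left_apply]

/-- For the weighted edge ideal `I = ((ab)^m, (bc)^m, (ax)^p, (by)^q, (cz)^r)` of the tree
with edges `{ab, bc, ax, by, cz}` in `R = K[a,b,c,x,y,z]` (here `a = X 0`, `b = X 1`,
`c = X 2`, `x = X 3`, `y = X 4`, `z = X 5`), if `n ≥ max{p,r}/m + 2` then `R/I^n` is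
not Cohen–Macaulay. -/
theorem not_cm_of_equal_internal_weights {K : Type*} [Field K] (m p q r : ℕ)
    (hm : 0 < m) (hp : 0 < p) (hq : 0 < q) (hr : 0 < r) :
    ∀ n : ℕ, ((max p r : ℚ) / m + 2 ≤ n) →
      ¬ IsCMQuot ((Ideal.span ({(X 0) ^ m * (X 1) ^ m, (X 1) ^ m * (X 2) ^ m,
          (X 0) ^ p * (X 3) ^ p, (X 1) ^ q * (X 4) ^ q, (X 2) ^ r * (X 5) ^ r} :
          Set (MvPolynomial (Fin 6) K))) ^ n) := by
  intro n hn ⟨rs, hmem, hreg, hlen⟩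
  have hn' : max p r + 2 * m ≤ m * n := by
    have hm' : (0 : ℚ) < m := by exact_mod_cast hm
    have h1 : ((max p r : ℚ) / m + 2) * m ≤ n * m := mul_le_mul_of_nonneg_right hn hm'.le
    rw [add_mul, div_mul_cancel₀ _ hm'.ne'] at h1
    have h2 : ((max p r + 2 * m : ℕ) : ℚ) ≤ ((m * n : ℕ) : ℚ) := by
      push_cast
      linarith
    exact_mod_cast h2
  have hpn : p + 2 * m ≤ m * n := le_trans (by have := le_max_left p r; omega) hn'
  have hrn : r + 2 * m ≤ m * n := le_trans (by have := le_max_right p r; omega) hn'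
  obtain ⟨k, rfl⟩ : ∃ k, n = k + 1 := by
    cases n with
    | zero => omega
    | succ k => exact ⟨k, rfl⟩
  have hJ := aux_mem (K := K) m p q r (k + 1)
  have hdim := aux_dim (K := K) (Ideal.span ({(X 0) ^ m * (X 1) ^ m, (X 1) ^ m * (X 2) ^ m,
          (X 0) ^ p * (X 3) ^ p, (X 1) ^ q * (X 4) ^ q, (X 2) ^ r * (X 5) ^ r} :
          Set (MvPolynomial (Fin 6) K)) ^ (k + 1)) ![3, 4, 5] ![0, 0, 0, X 0, X 1, X 2]
          (by intro i; fin_cases i <;> rfl) (by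
      intro s hs
      have h1 := Ideal.pow_le_self (Nat.succ_ne_zero k) hs
      have h2 : Ideal.span ({(X 0) ^ m * (X 1) ^ m, (X 1) ^ m * (X 2) ^ m,
          (X 0) ^ p * (X 3) ^ p, (X 1) ^ q * (X 4) ^ q, (X 2) ^ r * (X 5) ^ r} :
          Set (MvPolynomial (Fin 6) K)) ≤ RingHom.ker (aeval (R := K)
            (![0, 0, 0, X 0, X 1, X 2] : Fin 6 → MvPolynomial (Fin 3) K)) := by
        rw [Ideal.span_le]
        intro g hg
        simp only [Set.mem_insert_iff, Set.mem_singleton_iff] at hg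
        rcases hg with rfl | rfl | rfl | rfl | rfl <;>
          simp [RingHom.mem_ker, hm.ne', hp.ne', hq.ne', hr.ne']
      exact h2 h1)
  revert hreg hdim hlen
  generalize Ideal.span ({(X 0) ^ m * (X 1) ^ m, (X 1) ^ m * (X 2) ^ m,
          (X 0) ^ p * (X 3) ^ p, (X 1) ^ q * (X 4) ^ q, (X 2) ^ r * (X 5) ^ r} :
          Set (MvPolynomial (Fin 6) K)) ^ (k + 1) = J at hJ ⊢
  intro hreg hlen hdim
  have hlen3 : 3 ≤ rs.length := by
    have h1 : ((3 : ℕ) : WithBot ℕ∞) ≤ (rs.length : WithBot ℕ∞) := hdim.trans hlen.ge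
    exact_mod_cast h1
  have hcc : ∀ s ∈ rs, constantCoeff s = 0 := by
    intro s hs
    have h1 : Ideal.span (Set.range (X : Fin 6 → MvPolynomial (Fin 6) K)) ≤
        RingHom.ker (constantCoeff : MvPolynomial (Fin 6) K →+* K) := by
      rw [Ideal.span_le]
      rintro _ ⟨i, rfl⟩
      simp [RingHom.mem_ker]
    exact h1 (hmem s hs)
  obtain ⟨r₁, r₂, r₃, l, rfl⟩ : ∃ r₁ r₂ r₃ l, rs = r₁ :: r₂ :: r₃ :: l := by
    match rs, hlen3 with
    | r₁ :: r₂ :: r₃ :: l, _ => exact ⟨r₁, r₂, r₃, l, rfl⟩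
  have hw : RingTheory.Sequence.IsWeaklyRegular (MvPolynomial (Fin 6) K ⧸ J) [r₁, r₂, r₃] := by
    have h1 : RingTheory.Sequence.IsWeaklyRegular (MvPolynomial (Fin 6) K ⧸ J)
      ([r₁, r₂, r₃] ++ l) := hreg.toIsWeaklyRegular
    exact ((RingTheory.Sequence.isWeaklyRegular_append_iff _ _ _).1 h1).1
  have c1 := hcc r₁ (by simp)
  have c2 := hcc r₂ (by simp)
  have c3 := hcc r₃ (by simp)
  obtain ⟨N, hNm, hNp, hNq, hNr⟩ : ∃ N, m * (k + 1) ≤ N ∧ p * (k + 1) ≤ N ∧ q * (k + 1) ≤ N ∧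
      r * (k + 1) ≤ N :=
    ⟨m * (k + 1) + p * (k + 1) + q * (k + 1) + r * (k + 1), by omega, by omega, by omega, by omega⟩
  have hpN : p ≤ N := le_trans (by nlinarith) hNp
  have hrN : r ≤ N := le_trans (by nlinarith) hNr
  have hmk : m * k ≤ N := le_trans (by nlinarith) hNm
  have hqk : q * k ≤ N := le_trans (by nlinarith) hNq
  revert hw
  rcases le_or_gt q m with hqm | hqm
  · refine aux_key2 J _ hJ 3 {0, 1, 5} {0, 4, 2} N
      (Finsupp.single 1 (q * k) + Finsupp.single 2 r + Finsupp.single 3 N) 1 4 (by simp) (by simp)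
      ?_ ?_ ?_ ?_ r₁ r₂ r₃ c1 c2 c3
    · rintro ⟨u, w, v, t, s, h0, h1, h2, h3, h4, h5, h6⟩
      simp [hm.ne', hp.ne', hq.ne', hr.ne'] at h1 h2 h3 h4 h5 h6
      obtain ⟨rfl, rfl⟩ := h1
      subst h5 h6
      have : w = k + 1 := by omega
      subst this
      simp at h3
      omega
    · rintro ⟨u, w, v, t, s, h0, h1, h2, h3, h4, h5, h6⟩
      simp [hm.ne', hp.ne', hq.ne', hr.ne'] at h1 h2 h3 h4 h5 h6
      obtain ⟨rfl, rfl⟩ := h1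
      subst h6
      have e1 : w + t = k + 1 := by omega
      have e2 : q * w ≤ m * w := Nat.mul_le_mul_right _ hqm
      have e3 : q * w + q * t = q * k + q := by rw [← mul_add, e1]; ring
      simp at h2
      omega
    · rintro i (rfl | rfl | rfl) j (rfl | rfl | rfl)
      · exact ⟨0, 0, k + 1, 0, 0, by simp, by simp; omega⟩
      · exact ⟨0, 0, k + 1, 0, 0, by simp, by simp; omega⟩
      · exact ⟨0, 0, k + 1, 0, 0, by simp, by simp; omega⟩
      · exact ⟨k + 1, 0, 0, 0, 0, by simp, by simp; omega⟩
      · exact ⟨0, 0, 0, k + 1, 0, by simp, by simp; omega⟩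
      · exact ⟨0, k + 1, 0, 0, 0, by simp, by simp; omega⟩
      · exact ⟨0, 0, k + 1, 0, 0, by simp, by simp; omega⟩
      · exact ⟨0, 0, 0, k, 1, by simp, by simp; omega⟩
      · exact ⟨0, 0, 0, 0, k + 1, by simp, by simp; omega⟩
    · intro i hi
      fin_cases i <;> simp at hi ⊢
  · refine aux_key2 J _ hJ 4 {1, 3, 5} {0, 1, 2} N
      (Finsupp.single 0 p + Finsupp.single 1 (m * k) + Finsupp.single 2 r + Finsupp.single 4 N)
      3 0 (by simp) (by simp) ?_ ?_ ?_ ?_ r₁ r₂ r₃ c1 c2 c3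
    · rintro ⟨u, w, v, t, s, h0, h1, h2, h3, h4, h5, h6⟩
      simp [hr.ne'] at h1 h2 h3 h4 h5 h6
      subst h6
      have e2 : m * t ≤ q * t := Nat.mul_le_mul_right _ hqm.le
      have e3 : m * (u + w + t) ≤ m * k := by rw [mul_add, mul_add]; omega
      have e4 := Nat.le_of_mul_le_mul_left e3 hm
      have e5 : p * v ≤ p * 1 := by omega
      have e6 := Nat.le_of_mul_le_mul_left e5 hp
      have e7 : v = 1 := by omega
      subst e7
      have e8 : m * u = 0 := by omega
      have e9 : u = 0 := by simpa [hm.ne'] using e8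
      subst e9
      have e10 : w + t = k := by omega
      have e11 : t = 0 := by
        subst e10
        by_contra ht
        have : m * t < q * t := Nat.mul_lt_mul_of_pos_right hqm (Nat.pos_of_ne_zero ht)
        simp [mul_add] at h2
        omega
      have e12 : w = k := by omega
      subst e12
      rw [mul_add] at hrn
      simp at h3
      omega
    · rintro ⟨u, w, v, t, s, h0, h1, h2, h3, h4, h5, h6⟩
      simp [hp.ne', hr.ne'] at h1 h2 h3 h4 h5 h6
      subst h4 h6
      have e2 : m * t ≤ q * t := Nat.mul_le_mul_right _ hqm.le
      have e3 : m * (u + w + t) ≤ m * k := by rw [mul_add, mul_add]; omega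
      have e4 := Nat.le_of_mul_le_mul_left e3 hm
      omega
    · rintro i (rfl | rfl | rfl) j (rfl | rfl | rfl)
      · exact ⟨k + 1, 0, 0, 0, 0, by simp, by simp; omega⟩
      · exact ⟨0, 0, 0, k + 1, 0, by simp, by simp; omega⟩
      · exact ⟨0, k + 1, 0, 0, 0, by simp, by simp; omega⟩
      · exact ⟨0, 0, k + 1, 0, 0, by simp, by simp; omega⟩
      · exact ⟨0, 0, 0, k + 1, 0, by simp, by simp; omega⟩
      · exact ⟨0, k, 1, 0, 0, by simp, by simp; omega⟩
      · exact ⟨k, 0, 0, 0, 1, by simp, by simp; omega⟩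
      · exact ⟨0, 0, 0, k + 1, 0, by simp, by simp; omega⟩
      · exact ⟨0, 0, 0, 0, k + 1, by simp, by simp; omega⟩
    · intro i hi
      fin_cases i <;> simp at hi ⊢
end

section
/- Let R = K[a,b,c,x,y,z] and I = (a^k b^k, b^m c^m, a^p x^p, b^q y^q, c^r z^r) with positive integers k < m and p, q, r. If R/I^n is Cohen-Macaulay for all n ≥ 1, then r ≥ m·(⌈m/(m−k)⌉ − 2). -/
open MvPolynomial

universe u

section Alg
variable {R : Type*} [CommRing R] [IsNoetherianRing R]

theorem ass_step {M : Type*} [AddCommGroup M] [Module R M] [Module.Finite R M]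
    (mm P : Ideal R) [hm : mm.IsPrime] (hP : IsAssociatedPrime P M) (hPm : P ≤ mm)
    (x : R) (hx : x ∈ mm) (hreg : IsSMulRegular M x) :
    ∃ Q : Ideal R, IsAssociatedPrime Q (QuotSMulTop x M) ∧ P < Q ∧ Q ≤ mm := by
  have hP' := hP
  rw [isAssociatedPrime_iff] at hP'
  obtain ⟨hPp, u, hu⟩ := hP'
  have hPu : ∀ a, a ∈ P ↔ a • u = 0 := by
    intro a
    rw [hu, Submodule.mem_colon_singleton, Submodule.mem_bot]
  have hu0 : u ≠ 0 := by
    intro h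
    apply hPp.ne_top
    rw [Ideal.eq_top_iff_one, hPu, h, smul_zero]
  have hxP : x ∉ P := by
    intro h
    rw [hPu] at h
    exact hu0 (hreg (by simpa using h))
  let N : Submodule R M := Submodule.torsionBySet R M P
  have hN : ∀ v, v ∈ N ↔ ∀ a ∈ P, a • v = 0 := by
    intro v
    simp [N, Submodule.mem_torsionBySet_iff]
  have huN : u ∈ N := (hN u).2 fun a ha => (hPu a).1 ha
  have hsupp : (⟨mm, hm⟩ : PrimeSpectrum R) ∈ Module.support R (QuotSMulTop x N) := by
    rw [Module.support_quotSMulTop]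
    refine ⟨?_, by simpa using hx⟩
    rw [Module.mem_support_iff_of_finite]
    intro a ha
    apply hPm
    rw [hPu]
    rw [Module.mem_annihilator] at ha
    exact congrArg Subtype.val (ha ⟨u, huN⟩)
  rw [Module.mem_support_iff_of_finite] at hsupp
  obtain ⟨Q, hQ, hQm⟩ := Ideal.exists_minimalPrimes_le hsupp
  have hQa : IsAssociatedPrime Q (QuotSMulTop x N) :=
    Module.associatedPrimes.minimalPrimes_annihilator_subset_associatedPrimes R _ hQ
  have hann := hQ.1.2
  have hxQ : x ∈ Q := hann (QuotSMulTop.mem_annihilator _ x)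
  have hPQ : P ≤ Q := by
    intro a ha
    apply hann
    rw [Module.mem_annihilator]
    intro w
    obtain ⟨⟨v, hv⟩, rfl⟩ := Submodule.Quotient.mk_surjective _ w
    rw [← Submodule.Quotient.mk_smul]
    have : a • (⟨v, hv⟩ : N) = 0 := Subtype.ext ((hN v).1 hv a ha)
    rw [this, Submodule.Quotient.mk_zero]
  refine ⟨Q, hQa.map_of_injective (QuotSMulTop.map x N.subtype) ?_,
    lt_of_le_of_ne hPQ (fun h => hxP (h ▸ hxQ)), hQm⟩
  rw [← LinearMap.ker_eq_bot, LinearMap.ker_eq_bot']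
  intro w hw
  obtain ⟨⟨v, hv⟩, rfl⟩ := Submodule.Quotient.mk_surjective _ w
  rw [QuotSMulTop.map_apply_mk, Submodule.Quotient.mk_eq_zero] at hw
  rw [Submodule.Quotient.mk_eq_zero]
  rw [Submodule.mem_smul_pointwise_iff_exists] at hw ⊢
  obtain ⟨y, -, hy⟩ := hw
  refine ⟨⟨y, (hN y).2 fun a ha => ?_⟩, trivial, Subtype.ext hy⟩
  apply hreg
  have := (hN v).1 hv a ha
  simp only [Submodule.subtype_apply] at hy
  rw [← hy, smul_comm] at this
  simpa using this

theorem length_le_coheight (mm : Ideal R) [hm : mm.IsPrime] (rs : List R) :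
    ∀ {M : Type u} [AddCommGroup M] [Module R M] [Module.Finite R M]
    (P : PrimeSpectrum R) (_ : IsAssociatedPrime P.asIdeal M) (_ : P.asIdeal ≤ mm)
    (_ : ∀ r ∈ rs, r ∈ mm) (_ : RingTheory.Sequence.IsWeaklyRegular M rs),
    (rs.length : ℕ∞) ≤ Order.coheight P := by
  induction rs with
  | nil => intros; simp
  | cons x rs ih =>
    intro M _ _ _ P hP hPm hrs hreg
    rw [RingTheory.Sequence.isWeaklyRegular_cons_iff] at hreg
    obtain ⟨Q, hQ, hPQ, hQm⟩ := ass_step mm P.asIdeal hP hPm x (hrs x (by simp)) hreg.1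
    have h1 := ih (M := QuotSMulTop x M) ⟨Q, hQ.isPrime⟩ hQ hQm
      (fun r hr => hrs r (by simp [hr])) hreg.2
    have h2 : Order.coheight (⟨Q, hQ.isPrime⟩ : PrimeSpectrum R) + 1 ≤ Order.coheight P :=
      Order.coheight_add_one_le (by exact hPQ)
    refine le_trans ?_ h2
    simp only [List.length_cons, Nat.cast_add, Nat.cast_one]
    gcongr

end Alg

theorem coheight_le_quot {R : Type*} [CommRing R] (P : PrimeSpectrum R) (J : Ideal R) (h : J ≤ P.asIdeal) :
    (Order.coheight P : WithBot ℕ∞) ≤ ringKrullDim (R ⧸ J) := by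
  rw [Order.coheight_eq_krullDim_Ici, ringKrullDim_quotient]
  let f : Set.Ici P → PrimeSpectrum.zeroLocus (J : Set R) :=
    fun Q => ⟨Q.1, fun a ha => Q.2 (h ha)⟩
  exact Order.krullDim_le_of_strictMono f (fun a b hab => hab)

theorem not_cm_aux {K : Type*} [Field K] (J : Ideal (MvPolynomial (Fin 6) K))
    (T : Set (Fin 6 →₀ ℕ)) (hJ : J = Ideal.span ((fun s => monomial s (1 : K)) '' T))
    (hJ3 : ∀ s ∈ T, s 0 ≠ 0 ∨ s 1 ≠ 0 ∨ s 2 ≠ 0)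
    (u : Fin 6 →₀ ℕ) (hu : ¬ ∃ s ∈ T, s ≤ u) (j₁ j₂ : Fin 6)
    (hS : ∀ i, i ≠ j₁ → i ≠ j₂ → ∃ N : ℕ, ∃ s ∈ T, s ≤ u + Finsupp.single i N) :
    ¬ IsCMQuot J := by
  rintro ⟨rs, hrs, hreg, hlen⟩
  -- dimension at least three
  have hdim : (3 : WithBot ℕ∞) ≤ ringKrullDim (MvPolynomial (Fin 6) K ⧸ J) := by
    let φ : MvPolynomial (Fin 6) K →ₐ[K] MvPolynomial (Fin 3) K :=
      aeval ![0, 0, 0, X 0, X 1, X 2]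
    have hφ : ∀ a ∈ J, φ.toRingHom a = 0 := by
      intro a ha
      have : J ≤ RingHom.ker φ.toRingHom := by
        rw [hJ, Ideal.span_le]
        rintro _ ⟨s, hs, rfl⟩
        simp only [SetLike.mem_coe, RingHom.mem_ker]
        change φ (monomial s 1) = 0
        simp only [φ, aeval_monomial, Finsupp.prod_fintype, map_one, one_mul, pow_zero, implies_true, Fin.prod_univ_six]
        rcases hJ3 s hs with h | h | h <;> simp [h]
      exact this ha
    have hsurj : Function.Surjective φ := by
      have : φ.comp (aeval ![X 3, X 4, X 5]) = AlgHom.id K (MvPolynomial (Fin 3) K) := by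
        apply MvPolynomial.algHom_ext
        intro i
        fin_cases i <;> simp [φ]
      intro y
      exact ⟨_, DFunLike.congr_fun this y⟩
    have := ringKrullDim_le_of_surjective (Ideal.Quotient.lift J φ.toRingHom hφ)
      (Ideal.Quotient.lift_surjective_of_surjective _ _ hsurj)
    rw [MvPolynomial.ringKrullDim_of_isNoetherianRing] at this
    simpa using this
  let mm : Ideal (MvPolynomial (Fin 6) K) := RingHom.ker (constantCoeff (σ := Fin 6) (R := K))
  have hmm : mm.IsPrime := RingHom.ker_isPrime _
  have hrs' : ∀ r ∈ rs, r ∈ mm := by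
    intro r hr
    have : Ideal.span (Set.range (X : Fin 6 → MvPolynomial (Fin 6) K)) ≤ mm := by
      rw [Ideal.span_le]
      rintro _ ⟨i, rfl⟩
      simp [mm, RingHom.mem_ker]
    exact this (hrs r hr)
  let A : Ideal (MvPolynomial (Fin 6) K) :=
    Module.annihilator _ (Submodule.span (MvPolynomial (Fin 6) K)
      {(Ideal.Quotient.mk J (monomial u 1) : MvPolynomial (Fin 6) K ⧸ J)})
  have hA : ∀ g, g ∈ A ↔ g * monomial u 1 ∈ J := by
    intro g
    change g ∈ Module.annihilator _ _ ↔ _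
    rw [← Submodule.annihilator, Submodule.mem_annihilator_span_singleton]
    rw [← Ideal.Quotient.eq_zero_iff_mem, map_mul]
    rfl
  have hAm : A ≤ mm := by
    intro g hg
    rw [hA, hJ, mem_ideal_span_monomial_image] at hg
    by_contra hgm
    apply hu
    apply hg u
    rw [mem_support_iff]
    have h0 : coeff 0 g ≠ 0 := hgm
    have := coeff_mul_monomial (0 : Fin 6 →₀ ℕ) u (1 : K) g
    rw [zero_add, mul_one] at this
    rwa [this]
  obtain ⟨Q, hQ, hQm⟩ := Ideal.exists_minimalPrimes_le hAm
  have hQa : IsAssociatedPrime Q (MvPolynomial (Fin 6) K ⧸ J) :=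
    (show IsAssociatedPrime Q (Submodule.span (MvPolynomial (Fin 6) K)
      {(Ideal.Quotient.mk J (monomial u 1) : MvPolynomial (Fin 6) K ⧸ J)}) from
    Module.associatedPrimes.minimalPrimes_annihilator_subset_associatedPrimes _ _ hQ).map_of_injective
      (Submodule.subtype _) (Submodule.subtype_injective _)
  have hQp := hQa.isPrime
  have hXQ : ∀ i, i ≠ j₁ → i ≠ j₂ → X i ∈ Q := by
    intro i h1 h2
    obtain ⟨N, s, hs, hsu⟩ := hS i h1 h2
    apply hQp.mem_of_pow_mem N
    apply hQ.1.2
    rw [hA, X_pow_eq_monomial, monomial_mul, hJ, mem_ideal_span_monomial_image]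
    intro xi hxi
    have : xi = Finsupp.single i N + u := by
      have := support_monomial_subset hxi
      simpa using this
    exact ⟨s, hs, by rw [this, add_comm]; exact hsu⟩
  have hlen1 := length_le_coheight mm rs (M := MvPolynomial (Fin 6) K ⧸ J) ⟨Q, hQp⟩ hQa hQm hrs'
    hreg.toIsWeaklyRegular
  have hle2 : ringKrullDim (MvPolynomial (Fin 6) K ⧸ Q) ≤ (2 : WithBot ℕ∞) := by
    let ψ : MvPolynomial (Fin 2) K →ₐ[K] (MvPolynomial (Fin 6) K ⧸ Q) :=
      aeval ![Ideal.Quotient.mk Q (X j₁), Ideal.Quotient.mk Q (X j₂)]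
    have hψ : Function.Surjective ψ := by
      rw [← AlgHom.range_eq_top, eq_top_iff]
      rintro y -
      obtain ⟨y, rfl⟩ := Ideal.Quotient.mk_surjective y
      induction y using MvPolynomial.induction_on with
      | C a => exact ψ.range.algebraMap_mem a
      | add p q hp hq => rw [map_add]; exact add_mem hp hq
      | mul_X p i hp =>
        rw [map_mul]
        refine mul_mem hp ?_
        by_cases h1 : i = j₁
        · exact ⟨X 0, by simp [ψ, h1]⟩
        by_cases h2 : i = j₂
        · exact ⟨X 1, by simp [ψ, h2]⟩
        rw [Ideal.Quotient.eq_zero_iff_mem.2 (hXQ i h1 h2)]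
        exact zero_mem _
    have := ringKrullDim_le_of_surjective ψ.toRingHom hψ
    rw [MvPolynomial.ringKrullDim_of_isNoetherianRing] at this
    simpa using this
  have h5 := coheight_le_quot ⟨Q, hQp⟩ Q le_rfl
  have h6 : ((rs.length : ℕ∞) : WithBot ℕ∞) ≤ 2 :=
    (WithBot.coe_le_coe.2 hlen1).trans (h5.trans hle2)
  have h7 : (3 : WithBot ℕ∞) ≤ ((rs.length : ℕ∞) : WithBot ℕ∞) := by
    rw [← hlen] at hdim
    exact hdim
  have h8 := h7.trans h6
  exact absurd h8 (by decide)

/-- Exponent vector with the given entries. -/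
noncomputable def expVec (a b c x y z : ℕ) : Fin 6 →₀ ℕ :=
  Finsupp.equivFunOnFinite.symm ![a, b, c, x, y, z]

theorem monomial_expVec {K : Type*} [Field K] (a b c x y z : ℕ) :
    (monomial (expVec a b c x y z) (1 : K)) =
      X 0 ^ a * X 1 ^ b * X 2 ^ c * X 3 ^ x * X 4 ^ y * X 5 ^ z := by
  rw [monomial_eq]
  simp [Finsupp.prod_fintype, Fin.prod_univ_six, expVec]

/-- Exponents of the products of `n` generators. -/
def powExps (k m p q r n : ℕ) : Set (Fin 6 →₀ ℕ) :=
  {s | ∃ e₁ e₂ e₃ e₄ e₅ : ℕ, e₁ + e₂ + e₃ + e₄ + e₅ = n ∧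
    s = expVec (k * e₁ + p * e₃) (k * e₁ + m * e₂ + q * e₄) (m * e₂ + r * e₅)
      (p * e₃) (q * e₄) (r * e₅)}

theorem pow_eq_span {K : Type*} [Field K] (k m p q r n : ℕ) :
    (Ideal.span ({(X 0) ^ k * (X 1) ^ k, (X 1) ^ m * (X 2) ^ m,
          (X 0) ^ p * (X 3) ^ p, (X 1) ^ q * (X 4) ^ q, (X 2) ^ r * (X 5) ^ r} :
          Set (MvPolynomial (Fin 6) K))) ^ n =
      Ideal.span ((fun s => monomial s (1 : K)) '' powExps k m p q r n) := by
  apply le_antisymm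
  · induction n with
    | zero =>
      rw [pow_zero, Ideal.one_eq_top, top_le_iff, Ideal.eq_top_iff_one]
      apply Ideal.subset_span
      refine ⟨_, ⟨0, 0, 0, 0, 0, rfl, rfl⟩, ?_⟩
      simp [monomial_expVec]
    | succ n ih =>
      rw [pow_succ]
      refine (Ideal.mul_mono_left ih).trans ?_
      rw [Ideal.span_mul_span', Ideal.span_le]
      rintro _ ⟨_, ⟨_, ⟨e₁, e₂, e₃, e₄, e₅, he, rfl⟩, rfl⟩, g, hg, rfl⟩
      simp only [Set.mem_insert_iff, Set.mem_singleton_iff] at hg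
      apply Ideal.subset_span
      rcases hg with rfl | rfl | rfl | rfl | rfl
      · refine ⟨_, ⟨e₁ + 1, e₂, e₃, e₄, e₅, by omega, rfl⟩, ?_⟩
        simp only [monomial_expVec]; ring
      · refine ⟨_, ⟨e₁, e₂ + 1, e₃, e₄, e₅, by omega, rfl⟩, ?_⟩
        simp only [monomial_expVec]; ring
      · refine ⟨_, ⟨e₁, e₂, e₃ + 1, e₄, e₅, by omega, rfl⟩, ?_⟩
        simp only [monomial_expVec]; ring
      · refine ⟨_, ⟨e₁, e₂, e₃, e₄ + 1, e₅, by omega, rfl⟩, ?_⟩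
        simp only [monomial_expVec]; ring
      · refine ⟨_, ⟨e₁, e₂, e₃, e₄, e₅ + 1, by omega, rfl⟩, ?_⟩
        simp only [monomial_expVec]; ring
  · rw [Ideal.span_le]
    rintro _ ⟨_, ⟨e₁, e₂, e₃, e₄, e₅, rfl, rfl⟩, rfl⟩
    have key : ((fun s => monomial s (1 : K)) (expVec (k * e₁ + p * e₃)
        (k * e₁ + m * e₂ + q * e₄) (m * e₂ + r * e₅) (p * e₃) (q * e₄) (r * e₅))) =
        ((X 0) ^ k * (X 1) ^ k) ^ e₁ * ((X 1) ^ m * (X 2) ^ m) ^ e₂ *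
          ((X 0) ^ p * (X 3) ^ p) ^ e₃ * ((X 1) ^ q * (X 4) ^ q) ^ e₄ *
          ((X 2) ^ r * (X 5) ^ r) ^ e₅ := by
      simp only [monomial_expVec]; ring
    rw [key, SetLike.mem_coe]
    simp only [pow_add]
    refine Ideal.mul_mem_mul (Ideal.mul_mem_mul (Ideal.mul_mem_mul (Ideal.mul_mem_mul ?_ ?_) ?_) ?_) ?_ <;>
    exact Ideal.pow_mem_pow (Ideal.subset_span (by simp)) _

/-- Divisibility of a monomial by a product of `n` generators. -/
def MemPow (k m p q r n : ℕ) (a b c x y z : ℕ) : Prop :=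
  ∃ e₁ e₂ e₃ e₄ e₅ : ℕ, e₁ + e₂ + e₃ + e₄ + e₅ = n ∧ k * e₁ + p * e₃ ≤ a ∧
    k * e₁ + m * e₂ + q * e₄ ≤ b ∧ m * e₂ + r * e₅ ≤ c ∧ p * e₃ ≤ x ∧ q * e₄ ≤ y ∧ r * e₅ ≤ z

theorem expVec_le (a b c x y z : ℕ) (u : Fin 6 →₀ ℕ) :
    expVec a b c x y z ≤ u ↔
      a ≤ u 0 ∧ b ≤ u 1 ∧ c ≤ u 2 ∧ x ≤ u 3 ∧ y ≤ u 4 ∧ z ≤ u 5 := by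
  rw [Finsupp.le_def]
  simp [Fin.forall_fin_succ, expVec]

theorem exists_powExps_iff (k m p q r n : ℕ) (u : Fin 6 →₀ ℕ) :
    (∃ s ∈ powExps k m p q r n, s ≤ u) ↔
      MemPow k m p q r n (u 0) (u 1) (u 2) (u 3) (u 4) (u 5) := by
  constructor
  · rintro ⟨_, ⟨e₁, e₂, e₃, e₄, e₅, he, rfl⟩, h⟩
    exact ⟨e₁, e₂, e₃, e₄, e₅, he, (expVec_le _ _ _ _ _ _ _).1 h⟩
  · rintro ⟨e₁, e₂, e₃, e₄, e₅, he, h⟩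
    exact ⟨_, ⟨e₁, e₂, e₃, e₄, e₅, he, rfl⟩, (expVec_le _ _ _ _ _ _ _).2 h⟩

theorem not_cm {K : Type*} [Field K] (k m p q r n : ℕ)
    (hk : 0 < k) (hm : 0 < m) (hp : 0 < p) (hq : 0 < q) (hr : 0 < r) (hn : 1 ≤ n)
    (hCM : IsCMQuot ((Ideal.span ({(X 0) ^ k * (X 1) ^ k, (X 1) ^ m * (X 2) ^ m,
          (X 0) ^ p * (X 3) ^ p, (X 1) ^ q * (X 4) ^ q, (X 2) ^ r * (X 5) ^ r} :
          Set (MvPolynomial (Fin 6) K))) ^ n))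
    (a b c x y z : ℕ) (hu : ¬ MemPow k m p q r n a b c x y z) (j₁ j₂ : Fin 6)
    (h0 : 0 ≠ j₁ → 0 ≠ j₂ → ∃ N, MemPow k m p q r n N b c x y z)
    (h1 : 1 ≠ j₁ → 1 ≠ j₂ → ∃ N, MemPow k m p q r n a N c x y z)
    (h2 : 2 ≠ j₁ → 2 ≠ j₂ → ∃ N, MemPow k m p q r n a b N x y z)
    (h3 : 3 ≠ j₁ → 3 ≠ j₂ → ∃ N, MemPow k m p q r n a b c N y z)
    (h4 : 4 ≠ j₁ → 4 ≠ j₂ → ∃ N, MemPow k m p q r n a b c x N z)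
    (h5 : 5 ≠ j₁ → 5 ≠ j₂ → ∃ N, MemPow k m p q r n a b c x y N) : False := by
  refine not_cm_aux _ _ (pow_eq_span k m p q r n) ?_ (expVec a b c x y z) ?_ j₁ j₂ ?_ hCM
  · rintro _ ⟨e₁, e₂, e₃, e₄, e₅, he, rfl⟩
    have : e₁ ≠ 0 ∨ e₂ ≠ 0 ∨ e₃ ≠ 0 ∨ e₄ ≠ 0 ∨ e₅ ≠ 0 := by omega
    simp only [expVec, Finsupp.equivFunOnFinite_symm_apply_apply, Matrix.cons_val]
    rcases this with h | h | h | h | h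
    · left; have : 0 < k * e₁ := by positivity
      omega
    · right; right; have : 0 < m * e₂ := by positivity
      omega
    · left; have : 0 < p * e₃ := by positivity
      omega
    · right; left; have : 0 < q * e₄ := by positivity
      omega
    · right; right; have : 0 < r * e₅ := by positivity
      omega
  · rw [exists_powExps_iff]
    simpa [expVec] using hu
  · intro i hi1 hi2
    have : ∀ N, MemPow k m p q r n
        ((expVec a b c x y z + Finsupp.single i N : Fin 6 →₀ ℕ) 0)
        ((expVec a b c x y z + Finsupp.single i N : Fin 6 →₀ ℕ) 1)
        ((expVec a b c x y z + Finsupp.single i N : Fin 6 →₀ ℕ) 2)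
        ((expVec a b c x y z + Finsupp.single i N : Fin 6 →₀ ℕ) 3)
        ((expVec a b c x y z + Finsupp.single i N : Fin 6 →₀ ℕ) 4)
        ((expVec a b c x y z + Finsupp.single i N : Fin 6 →₀ ℕ) 5) →
        ∃ N : ℕ, ∃ s ∈ powExps k m p q r n, s ≤ expVec a b c x y z + Finsupp.single i N :=
      fun N h => ⟨N, (exists_powExps_iff _ _ _ _ _ _ _).2 h⟩
    fin_cases i
    · obtain ⟨N, e₁, e₂, e₃, e₄, e₅, he, h⟩ := h0 hi1 hi2
      refine this N ⟨e₁, e₂, e₃, e₄, e₅, he, ?_⟩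
      simp [expVec] ; omega
    · obtain ⟨N, e₁, e₂, e₃, e₄, e₅, he, h⟩ := h1 hi1 hi2
      refine this N ⟨e₁, e₂, e₃, e₄, e₅, he, ?_⟩
      simp [expVec] ; omega
    · obtain ⟨N, e₁, e₂, e₃, e₄, e₅, he, h⟩ := h2 hi1 hi2
      refine this N ⟨e₁, e₂, e₃, e₄, e₅, he, ?_⟩
      simp [expVec] ; omega
    · obtain ⟨N, e₁, e₂, e₃, e₄, e₅, he, h⟩ := h3 hi1 hi2
      refine this N ⟨e₁, e₂, e₃, e₄, e₅, he, ?_⟩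
      simp [expVec] ; omega
    · obtain ⟨N, e₁, e₂, e₃, e₄, e₅, he, h⟩ := h4 hi1 hi2
      refine this N ⟨e₁, e₂, e₃, e₄, e₅, he, ?_⟩
      simp [expVec] ; omega
    · obtain ⟨N, e₁, e₂, e₃, e₄, e₅, he, h⟩ := h5 hi1 hi2
      refine this N ⟨e₁, e₂, e₃, e₄, e₅, he, ?_⟩
      simp [expVec] ; omega

/-- For the weighted edge ideal `I = (a^k b^k, b^m c^m, a^p x^p, b^q y^q, c^r z^r)` of the
tree with edges `{ab, bc, ax, by, cz}` in `R = K[a,b,c,x,y,z]` (here `a = X 0`, `b = X 1`,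
`c = X 2`, `x = X 3`, `y = X 4`, `z = X 5`) with `k < m`: if `R/I^n` is Cohen–Macaulay
for all `n ≥ 1`, then `r ≥ m·(⌈m/(m−k)⌉ − 2)` (with `⌈m/(m−k)⌉ = (m + (m−k) − 1)/(m−k)`
the ceiling of `m/(m−k)`). -/
theorem r_lower_bound_of_cm {K : Type*} [Field K] (k m p q r : ℕ)
    (hk : 0 < k) (hkm : k < m) (hp : 0 < p) (hq : 0 < q) (hr : 0 < r)
    (hCM : ∀ n : ℕ, 1 ≤ n →
      IsCMQuot ((Ideal.span ({(X 0) ^ k * (X 1) ^ k, (X 1) ^ m * (X 2) ^ m,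
          (X 0) ^ p * (X 3) ^ p, (X 1) ^ q * (X 4) ^ q, (X 2) ^ r * (X 5) ^ r} :
          Set (MvPolynomial (Fin 6) K))) ^ n)) :
    m * ((m + (m - k) - 1) / (m - k) - 2) ≤ r := by
  obtain ⟨d, rfl⟩ : ∃ d, m = k + d := ⟨m - k, by omega⟩
  have hd : 0 < d := by omega
  obtain ⟨s, hs⟩ : ∃ s, s = (k + d + (k + d - k) - 1) / (k + d - k) - 2 := ⟨_, rfl⟩
  rw [← hs]
  have hdd : k + d - k = d := by omega
  rw [hdd] at hs
  -- `s + 2` is the ceiling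
  have ht2 : 2 ≤ (k + d + d - 1) / d := by
    rw [Nat.le_div_iff_mul_le hd]; omega
  have hs2 : (k + d + d - 1) / d = s + 2 := by omega
  have hH1 : s * d < k := by
    have := Nat.div_mul_le_self (k + d + d - 1) d
    rw [hs2] at this
    have h3 : (s + 2) * d = s * d + 2 * d := by ring
    omega
  have hH2 : k ≤ (s + 1) * d := by
    have := Nat.div_add_mod (k + d + d - 1) d
    have h4 := Nat.mod_lt (k + d + d - 1) hd
    rw [hs2] at this
    have h3 : d * (s + 2) = (s + 1) * d + d := by ring
    omega
  clear hs hs2 ht2 hdd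
  by_contra! hlt
  have hm : 0 < k + d := by omega
  by_cases hpt : p < k * (s + 2)
  · refine not_cm k (k + d) p q r (s + 2) hk hm hp hq hr (by omega) (hCM _ (by omega))
      p ((k + d) * (s + 1)) ((k + d) * (s + 2) + r) 0 0 0 ?_ 2 4 ?_ ?_ ?_ ?_ ?_ ?_
    · rintro ⟨e₁, e₂, e₃, e₄, e₅, he, h0, h1, h2, h3, h4, h5⟩
      have z3 : e₃ = 0 := by
        rcases Nat.eq_zero_or_pos e₃ with h | h
        · exact h
        · have := Nat.mul_pos hp h; omega
      have z4 : e₄ = 0 := by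
        rcases Nat.eq_zero_or_pos e₄ with h | h
        · exact h
        · have := Nat.mul_pos hq h; omega
      have z5 : e₅ = 0 := by
        rcases Nat.eq_zero_or_pos e₅ with h | h
        · exact h
        · have := Nat.mul_pos hr h; omega
      subst z3 z4 z5
      have he1 : e₁ < s + 2 := by
        have : k * e₁ < k * (s + 2) := by omega
        exact Nat.lt_of_mul_lt_mul_left this
      have he2 : e₁ + e₂ = s + 2 := by omega
      have he3 : e₁ ≤ s + 1 := by omega
      have he1d : d * e₁ ≤ d * (s + 1) := Nat.mul_le_mul_left _ he3
      have hsum : k * e₁ + (k + d) * e₂ + d * e₁ = (k + d) * (s + 2) := by rw [← he2]; ring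
      nlinarith
    · intro _ _
      refine ⟨k * (s + 2), s + 2, 0, 0, 0, 0, by omega, by omega, ?_, by omega, by omega,
        by omega, by omega⟩
      nlinarith
    · intro _ _
      exact ⟨(k + d) * (s + 2), 0, s + 2, 0, 0, 0, by omega, by omega, by omega, by omega,
        by omega, by omega, by omega⟩
    · intro h; exact absurd rfl h
    · intro _ _
      refine ⟨p, 0, s + 1, 1, 0, 0, by omega, by omega, by omega, by nlinarith, by omega,
        by omega, by omega⟩
    · intro _ h; exact absurd rfl h
    · intro _ _
      refine ⟨r, 0, s + 1, 0, 0, 1, by omega, by omega, by omega, by nlinarith, by omega,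
        by omega, by omega⟩
  · push Not at hpt
    have hsk : k * s ≤ (k + d) * s := Nat.mul_le_mul_right _ (by omega)
    have hp1 : k * (s + 1) ≤ p := le_trans (Nat.mul_le_mul_left _ (by omega)) hpt
    have hp2 : k * s ≤ p := le_trans (Nat.mul_le_mul_left _ (by omega)) hpt
    refine not_cm k (k + d) p q r (s + 1) hk hm hp hq hr (by omega) (hCM _ (by omega))
      p ((k + d) * s) r (p * (s + 1)) 0 0 ?_ 3 4 ?_ ?_ ?_ ?_ ?_ ?_
    · rintro ⟨e₁, e₂, e₃, e₄, e₅, he, h0, h1, h2, h3, h4, h5⟩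
      have z4 : e₄ = 0 := by
        rcases Nat.eq_zero_or_pos e₄ with h | h
        · exact h
        · have := Nat.mul_pos hq h; omega
      have z5 : e₅ = 0 := by
        rcases Nat.eq_zero_or_pos e₅ with h | h
        · exact h
        · have := Nat.mul_pos hr h; omega
      subst z4 z5
      rcases Nat.eq_zero_or_pos e₃ with z3 | z3
      · subst z3
        have he2 : e₁ + e₂ = s + 1 := by omega
        have hle : k * (s + 1) ≤ k * e₁ + (k + d) * e₂ := by rw [← he2]; nlinarith
        nlinarith
      · have hpe : p * 1 ≤ p * e₃ := Nat.mul_le_mul_left _ z3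
        have z1 : e₁ = 0 := by
          rcases Nat.eq_zero_or_pos e₁ with h | h
          · exact h
          · have := Nat.mul_pos hk h; omega
        have he3 : e₃ ≤ 1 := by
          have : p * e₃ ≤ p * 1 := by omega
          exact Nat.le_of_mul_le_mul_left this hp
        have : e₂ = s := by omega
        subst this
        omega
    · intro _ _
      exact ⟨p * (s + 1), 0, 0, s + 1, 0, 0, by omega, by omega, by omega, by omega,
        by omega, by omega, by omega⟩
    · intro _ _
      exact ⟨k * (s + 1), s + 1, 0, 0, 0, 0, by omega, by omega, by omega, by omega,
        by omega, by omega, by omega⟩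
    · intro _ _
      exact ⟨(k + d) * s, 0, s, 1, 0, 0, by omega, by omega, by omega, by omega,
        by nlinarith, by omega, by omega⟩
    · intro h; exact absurd rfl h
    · intro _ h; exact absurd rfl h
    · intro _ _
      exact ⟨r, s, 0, 0, 0, 1, by omega, by omega, by omega, by omega,
        by omega, by omega, by omega⟩
end
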